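/- Let α>0, 0<r<1, β∈ℝ, 1≤p≤∞, and let p' satisfy 1/p+1/p'=1. Define 𝒫_{α,r,n}(t) = Σ_{k=0}^∞ e^{-α(k+n)^r} e^{ikt} and M_n = sup_{t∈ℝ} |𝒫'_{α,r,n}(t)| / |𝒫_{α,r,n}(t)|. Then for all integers n with n ≥ 4π p' M_n if 1≤p'<∞ (and all n≥1 if p'=∞), one has E_n(C^{α,r}_{β,p})_C = ‖𝒫_{α,r,n}‖_{p'} · ( ‖cos t‖_{p'} / (2^{1/p'} π^{1+1/p'}) + δ_n M_n/n ), where |δ_n| < 14. -/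

import Mathlib

open MeasureTheory Real Filter
open scoped ENNReal

/-- The generalized Poisson kernel `P_{α,r,β}(t) = Σ_{k=1}^∞ e^{-α k^r} cos(kt − βπ/2)`. -/
noncomputable def genPoissonKernel (α r β : ℝ) (t : ℝ) : ℝ :=
  ∑' k : ℕ, Real.exp (-α * ((k : ℝ) + 1) ^ r) * Real.cos (((k : ℝ) + 1) * t - β * π / 2)

/-- Fourier cosine coefficient `a_k = (1/π)∫_{-π}^{π} f(t) cos(kt) dt`. -/
noncomputable def fourierCoefA (f : ℝ → ℝ) (k : ℕ) : ℝ :=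
  (1 / π) * ∫ t in (-π)..π, f t * Real.cos (k * t)

/-- Fourier sine coefficient `b_k = (1/π)∫_{-π}^{π} f(t) sin(kt) dt`. -/
noncomputable def fourierCoefB (f : ℝ → ℝ) (k : ℕ) : ℝ :=
  (1 / π) * ∫ t in (-π)..π, f t * Real.sin (k * t)

/-- Partial Fourier sum of order `m` of `f`. -/
noncomputable def fourierSum (m : ℕ) (f : ℝ → ℝ) (x : ℝ) : ℝ :=
  fourierCoefA f 0 / 2 +
    ∑ k ∈ Finset.Icc 1 m, (fourierCoefA f k * Real.cos (k * x) + fourierCoefB f k * Real.sin (k * x))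

/-- The class `C^{α,r}_{β,p}` of generalized Poisson integrals. -/
def poissonClass (α r β : ℝ) (p : ℝ≥0∞) : Set (ℝ → ℝ) :=
  {f | (∀ x, f (x + 2 * π) = f x) ∧ ∃ a₀ : ℝ, ∃ φ : ℝ → ℝ,
    (∀ x, φ (x + 2 * π) = φ x) ∧
    eLpNorm φ p (volume.restrict (Set.Ioc (0 : ℝ) (2 * π))) ≤ 1 ∧
    (∫ t in (0 : ℝ)..(2 * π), φ t) = 0 ∧
    ∀ x, f x = a₀ / 2 + (1 / π) * ∫ t in (-π)..π, genPoissonKernel α r β (x - t) * φ t}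

/-- `E_n(C^{α,r}_{β,p})_C`: uniform deviation of Fourier sums of order `n-1` on the class. -/
noncomputable def EnC (α r β : ℝ) (p : ℝ≥0∞) (n : ℕ) : ℝ :=
  ⨆ f ∈ poissonClass α r β p, ⨆ x : ℝ, |f x - fourierSum (n - 1) f x|

/-- `‖cos‖_{L_s}` over a period. -/
noncomputable def cosNorm (s : ℝ≥0∞) : ℝ :=
  (eLpNorm (fun t : ℝ => Real.cos t) s (volume.restrict (Set.Ioc (0 : ℝ) (2 * π)))).toReal

/-- `𝒫_{α,r,n}(t) = Σ_{k=0}^∞ e^{-α(k+n)^r} e^{ikt}`. -/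
noncomputable def Pn (α r : ℝ) (n : ℕ) (t : ℝ) : ℂ :=
  ∑' k : ℕ, (Real.exp (-α * ((k + n : ℕ) : ℝ) ^ r) : ℂ) *
    Complex.exp (Complex.I * (k : ℂ) * (t : ℂ))

/-- `M_n = sup_{t∈ℝ} |𝒫'_{α,r,n}(t)| / |𝒫_{α,r,n}(t)|`. -/
noncomputable def Mn (α r : ℝ) (n : ℕ) : ℝ :=
  ⨆ t : ℝ, ‖deriv (Pn α r n) t‖ / ‖Pn α r n t‖

/-!
The deviation `f - S_{n-1}(f)` is the convolution of the density `φ` with the kernel tail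
`F_θ(t) = Re (e^{i(nt-θ)} 𝒫_n(t))`, `θ = βπ/2`. By Hölder's inequality `π E_n ≤ ‖F_θ‖_{p'}`, and by
`L^p` duality equality would hold if the densities were not constrained to have mean zero.

Since `|𝒫_n'| ≤ M_n |𝒫_n|`, Grönwall's inequality shows that translating `F_θ` by `s/n` amounts to
replacing the phase `θ` by `θ - s`, up to an error `(e^{M_n s/n} - 1) |𝒫_n|`. With `s = π` this says
that `F_θ` is nearly antiperiodic, so replacing a near-extremal `ψ` by `(ψ - ψ(· + π/n)) / 2`
achieves mean zero at a small cost. With `s` ranging over `[0, 2π]` it says that `‖F_θ‖_{p'}` hardly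
depends on `θ`, hence is close to its mean over all phases, which Fubini's theorem evaluates as
`‖𝒫_n‖_{p'} ‖cos‖_{p'} / (2π)^{1/p'}`. When `M_n / n` is not small, the trivial bound
`|π E_n - mean| ≤ ‖𝒫_n‖_{p'}` suffices.

Nonmeasurable densities only produce constants: the kernel is real-analytic on `(0, 2π)`, by the
Euler transform of its completely monotone coefficients if `r ≤ 1` and by their geometric decay if
`r ≥ 1`, so it vanishes only on a null set.
-/

section PeriodicTranslation

variable {E : Type*} {g : ℝ → E} {T : ℝ}

theorem measurePreserving_toIocMod_add (hT : 0 < T) (a b c : ℝ) :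
    MeasurePreserving (fun t => toIocMod hT b (t + c))
      (volume.restrict (Set.Ioc a (a + T))) (volume.restrict (Set.Ioc b (b + T))) := by
  have : Fact (0 < T) := ⟨hT⟩
  exact (measurePreserving_subtype_coe measurableSet_Ioc).comp <|
    (AddCircle.measurePreserving_equivIoc T (a := b)).comp <|
      (measurePreserving_add_right volume (c : AddCircle T)).comp <|
        AddCircle.measurePreserving_mk T a

theorem comp_toIocMod_add_of_periodic (hg : Function.Periodic g T) (hT : 0 < T) (b c : ℝ) :
    (g ∘ fun t => toIocMod hT b (t + c)) = fun t => g (t + c) :=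
  funext fun _ => hg.sub_zsmul_eq _

theorem measurePreserving_toIocMod_sub (hT : 0 < T) (a b c : ℝ) :
    MeasurePreserving (fun t => toIocMod hT b (c - t))
      (volume.restrict (Set.Ioc a (a + T))) (volume.restrict (Set.Ioc b (b + T))) := by
  have : Fact (0 < T) := ⟨hT⟩
  exact (measurePreserving_subtype_coe measurableSet_Ioc).comp <|
    (AddCircle.measurePreserving_equivIoc T (a := b)).comp <|
      (Measure.measurePreserving_sub_left volume (c : AddCircle T)).comp <|
        AddCircle.measurePreserving_mk T a

theorem comp_toIocMod_sub_of_periodic (hg : Function.Periodic g T) (hT : 0 < T) (b c : ℝ) :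
    (g ∘ fun t => toIocMod hT b (c - t)) = fun t => g (c - t) :=
  funext fun _ => hg.sub_zsmul_eq _

variable [NormedAddCommGroup E]

theorem eLpNorm_comp_add_right_of_periodic (hg : Function.Periodic g T) (hT : 0 < T)
    {b : ℝ} (hm : AEStronglyMeasurable g (volume.restrict (Set.Ioc b (b + T)))) (a c : ℝ)
    (p : ℝ≥0∞) :
    eLpNorm (fun t => g (t + c)) p (volume.restrict (Set.Ioc a (a + T))) =
      eLpNorm g p (volume.restrict (Set.Ioc b (b + T))) := by
  rw [← comp_toIocMod_add_of_periodic hg hT b c]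
  exact eLpNorm_comp_measurePreserving hm (measurePreserving_toIocMod_add hT a b c)

theorem lpNorm_comp_measurePreserving {X Y : Type*} [MeasurableSpace X] [MeasurableSpace Y]
    {μ : Measure X} {ν : Measure Y} {τ : X → Y} (hτ : MeasurePreserving τ μ ν) {g : Y → E}
    (hm : AEStronglyMeasurable g ν) (p : ℝ≥0∞) : lpNorm (g ∘ τ) p μ = lpNorm g p ν := by
  rw [← toReal_eLpNorm (hm.comp_measurePreserving hτ), ← toReal_eLpNorm hm,
    eLpNorm_comp_measurePreserving hm hτ]

theorem lpNorm_comp_add_right_of_periodic (hg : Function.Periodic g T) (hT : 0 < T)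
    {b : ℝ} (hm : AEStronglyMeasurable g (volume.restrict (Set.Ioc b (b + T)))) (a c : ℝ)
    (p : ℝ≥0∞) :
    lpNorm (fun t => g (t + c)) p (volume.restrict (Set.Ioc a (a + T))) =
      lpNorm g p (volume.restrict (Set.Ioc b (b + T))) := by
  rw [← comp_toIocMod_add_of_periodic hg hT b c]
  exact lpNorm_comp_measurePreserving (measurePreserving_toIocMod_add hT a b c) hm p

theorem lpNorm_comp_sub_left_of_periodic (hg : Function.Periodic g T) (hT : 0 < T)
    {b : ℝ} (hm : AEStronglyMeasurable g (volume.restrict (Set.Ioc b (b + T)))) (a c : ℝ)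
    (p : ℝ≥0∞) :
    lpNorm (fun t => g (c - t)) p (volume.restrict (Set.Ioc a (a + T))) =
      lpNorm g p (volume.restrict (Set.Ioc b (b + T))) := by
  rw [← comp_toIocMod_sub_of_periodic hg hT b c]
  exact lpNorm_comp_measurePreserving (measurePreserving_toIocMod_sub hT a b c) hm p

theorem ae_ne_zero_of_periodic_of_analyticOnNhd_Ioo {f : ℝ → ℝ} (hf : Function.Periodic f T)
    (hT : 0 < T) (hfa : AnalyticOnNhd ℝ f (Set.Ioo 0 T)) {t₀ : ℝ} (ht₀ : t₀ ∈ Set.Ioo 0 T)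
    (hft₀ : f t₀ ≠ 0) : ∀ᵐ t, f t ≠ 0 := by
  have ae_Ioo : ∀ᵐ t ∂volume.restrict (Set.Ioo 0 T), f t ≠ 0 :=
    ae_restrict_le_codiscreteWithin measurableSet_Ioo <|
      hfa.preimage_zero_mem_codiscreteWithin hft₀ ht₀ (isConnected_Ioo hT)
  rw [Measure.restrict_congr_set Ioo_ae_eq_Ioc, ae_restrict_iff' measurableSet_Ioc] at ae_Ioo
  refine (isAddFundamentalDomain_Ioc hT 0 volume).measure_zero_of_invariant _ ?_ ?_
  · rintro ⟨_, m, rfl⟩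
    ext t
    have := hf.sub_int_mul_eq (x := t) m
    simp [Set.mem_vadd_set_iff_neg_vadd_mem, ← sub_eq_neg_add, AddSubgroup.vadd_def, this]
  · rw [zero_add]
    refine measure_mono_null (fun t ht => ?_) (ae_iff.1 ae_Ioo)
    simpa [and_comm, and_left_comm] using ht

end PeriodicTranslation

section LpPairing

variable {X : Type*} [MeasurableSpace X] {μ : Measure X} {p q : ℝ≥0∞}

theorem abs_integral_mul_le_lpNorm [p.HolderConjugate q] {g φ : X → ℝ} (hg : MemLp g q μ)
    (hφ : AEStronglyMeasurable φ μ) (hφ_le : eLpNorm φ p μ ≤ 1) :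
    |∫ t, g t * φ t ∂μ| ≤ lpNorm g q μ := by
  have enorm_le : ‖∫ t, g t * φ t ∂μ‖ₑ ≤ eLpNorm g q μ :=
    calc ‖∫ t, g t * φ t ∂μ‖ₑ ≤ ∫⁻ t, ‖g t * φ t‖ₑ ∂μ := enorm_integral_le_lintegral_enorm _
      _ = eLpNorm (g • φ) 1 μ := eLpNorm_one_eq_lintegral_enorm.symm
      _ ≤ eLpNorm g q μ * eLpNorm φ p μ := eLpNorm_smul_le_mul_eLpNorm hφ hg.1
      _ ≤ eLpNorm g q μ * 1 := by gcongr
      _ = eLpNorm g q μ := mul_one _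
  rw [← Real.norm_eq_abs, ← toReal_enorm, ← toReal_eLpNorm hg.1]
  exact ENNReal.toReal_mono hg.2.ne enorm_le

theorem lpNorm_le_add_mul_lpNorm {E F G : Type*} [NormedAddCommGroup E] [NormedAddCommGroup F]
    [NormedAddCommGroup G] (hq : 1 ≤ q) {f : X → E} {g : X → F} {h : X → G}
    (hg : MemLp g q μ) (hh : MemLp h q μ) {ε : ℝ} (hε : 0 ≤ ε)
    (hfgh : ∀ t, ‖f t‖ ≤ ‖g t‖ + ε * ‖h t‖) :
    lpNorm f q μ ≤ lpNorm g q μ + ε * lpNorm h q μ :=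
  calc lpNorm f q μ ≤ lpNorm ((fun t => ‖g t‖) + ε • fun t => ‖h t‖) q μ :=
        lpNorm_mono_real (hg.norm.add (hh.norm.const_smul ε)) hfgh
    _ ≤ lpNorm (fun t => ‖g t‖) q μ + lpNorm (ε • fun t => ‖h t‖) q μ :=
        lpNorm_add_le hg.norm hq
    _ = lpNorm g q μ + ε * lpNorm h q μ := by
        rw [lpNorm_const_smul, lpNorm_norm hg.1, lpNorm_norm hh.1, coe_nnnorm,
          Real.norm_of_nonneg hε]

theorem lintegral_enorm_rpow_eq_eLpNorm_rpow {E : Type*} [NormedAddCommGroup E] (hq₀ : q ≠ 0)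
    (hq : q ≠ ∞) (f : X → E) :
    ∫⁻ x, ‖f x‖ₑ ^ q.toReal ∂μ = eLpNorm f q μ ^ q.toReal := by
  rw [eLpNorm_eq_lintegral_rpow_enorm_toReal hq₀ hq, ← ENNReal.rpow_mul, one_div,
    inv_mul_cancel₀ (ENNReal.toReal_pos hq₀ hq).ne', ENNReal.rpow_one]

end LpPairing

section CompleteMonotonicity

/-- Complete monotonicity up to order `m` on `(0, ∞)`: `(-1)^j g^{(j)} ≥ 0` for all `j ≤ m`. The
function `g'` in the recursion is the negative of the derivative of `g`. -/
def CompletelyMonotoneUpTo : ℕ → (ℝ → ℝ) → Prop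
  | 0, g => ∀ x, 0 < x → 0 ≤ g x
  | m + 1, g => (∀ x, 0 < x → 0 ≤ g x) ∧
      ∃ g' : ℝ → ℝ, (∀ x, 0 < x → HasDerivAt g (-g' x) x) ∧ CompletelyMonotoneUpTo m g'

namespace CompletelyMonotoneUpTo

variable {m : ℕ} {f g : ℝ → ℝ}

theorem nonneg (hg : CompletelyMonotoneUpTo m g) {x : ℝ} (hx : 0 < x) : 0 ≤ g x :=
  match m, hg with
  | 0, hg => hg x hx
  | _ + 1, hg => hg.1 x hx

theorem pred (hg : CompletelyMonotoneUpTo (m + 1) g) : CompletelyMonotoneUpTo m g := by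
  induction m generalizing g with
  | zero => exact hg.1
  | succ m ih =>
    obtain ⟨g_nonneg, g', hasDeriv_g, hg'⟩ := hg
    exact ⟨g_nonneg, g', hasDeriv_g, ih hg'⟩

theorem add (hf : CompletelyMonotoneUpTo m f) (hg : CompletelyMonotoneUpTo m g) :
    CompletelyMonotoneUpTo m (fun x => f x + g x) := by
  induction m generalizing f g with
  | zero => exact fun x hx => add_nonneg (hf x hx) (hg x hx)
  | succ m ih =>
    obtain ⟨f_nonneg, f', hasDeriv_f, hf'⟩ := hf
    obtain ⟨g_nonneg, g', hasDeriv_g, hg'⟩ := hg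
    refine ⟨fun x hx => add_nonneg (f_nonneg x hx) (g_nonneg x hx), _, fun x hx => ?_, ih hf' hg'⟩
    exact ((hasDeriv_f x hx).add (hasDeriv_g x hx)).congr_deriv (by ring)

theorem mul (hf : CompletelyMonotoneUpTo m f) (hg : CompletelyMonotoneUpTo m g) :
    CompletelyMonotoneUpTo m (fun x => f x * g x) := by
  induction m generalizing f g with
  | zero => exact fun x hx => mul_nonneg (hf x hx) (hg x hx)
  | succ m ih =>
    obtain ⟨f_nonneg, f', hasDeriv_f, hf'⟩ := id hf
    obtain ⟨g_nonneg, g', hasDeriv_g, hg'⟩ := id hg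
    refine ⟨fun x hx => mul_nonneg (f_nonneg x hx) (g_nonneg x hx), _, fun x hx => ?_,
      (ih hf' hg.pred).add (ih hf.pred hg')⟩
    exact ((hasDeriv_f x hx).mul (hasDeriv_g x hx)).congr_deriv (by ring)

theorem const_mul_rpow_neg (m : ℕ) {c s : ℝ} (hc : 0 ≤ c) (hs : 0 ≤ s) :
    CompletelyMonotoneUpTo m (fun x => c * x ^ (-s)) := by
  induction m generalizing c s with
  | zero => exact fun x hx => by positivity
  | succ m ih =>
    refine ⟨fun x hx => by positivity, _, fun x hx => ?_,
      ih (mul_nonneg hc hs) (add_nonneg hs zero_le_one)⟩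
    refine ((Real.hasDerivAt_rpow_const (p := -s) (Or.inl hx.ne')).const_mul c).congr_deriv ?_
    rw [neg_add']
    ring

theorem exp_neg_mul_rpow (m : ℕ) {α r : ℝ} (hα : 0 ≤ α) (hr0 : 0 ≤ r) (hr1 : r ≤ 1) :
    CompletelyMonotoneUpTo m (fun x => Real.exp (-α * x ^ r)) := by
  induction m with
  | zero => exact fun x _ => (Real.exp_pos _).le
  | succ m ih =>
    refine ⟨fun x _ => (Real.exp_pos _).le, _, fun x hx => ?_,
      (const_mul_rpow_neg m (mul_nonneg hα hr0) (sub_nonneg.2 hr1)).mul ih⟩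
    refine ((Real.hasDerivAt_rpow_const (p := r) (Or.inl hx.ne')).const_mul (-α)).exp.congr_deriv ?_
    rw [neg_sub]
    ring

theorem antitoneOn (hg : CompletelyMonotoneUpTo (m + 1) g) : AntitoneOn g (Set.Ioi 0) := by
  obtain ⟨-, g', hasDeriv_g, hg'⟩ := hg
  refine antitoneOn_of_hasDerivWithinAt_nonpos (convex_Ioi 0)
    (fun x hx => (hasDeriv_g x hx).continuousAt.continuousWithinAt)
    (fun x hx => (hasDeriv_g x (interior_subset hx)).hasDerivWithinAt)
    (fun x hx => neg_nonpos.2 (hg'.nonneg (interior_subset hx)))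

theorem sub_comp_add_one (hg : CompletelyMonotoneUpTo (m + 1) g) :
    CompletelyMonotoneUpTo m (fun x => g x - g (x + 1)) := by
  have diff_nonneg {m : ℕ} {g : ℝ → ℝ} (hg : CompletelyMonotoneUpTo (m + 1) g) (x : ℝ)
      (hx : 0 < x) : 0 ≤ g x - g (x + 1) :=
    sub_nonneg.2 <| hg.antitoneOn hx (Set.mem_Ioi.2 (by linarith)) (by linarith)
  induction m generalizing g with
  | zero => exact diff_nonneg hg
  | succ m ih =>
    obtain ⟨-, g', hasDeriv_g, hg'⟩ := id hg
    refine ⟨diff_nonneg hg, _, fun x hx => ?_, ih hg'⟩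
    have hasDeriv_shift := (hasDeriv_g (x + 1) (by linarith)).comp_add_const x 1
    exact ((hasDeriv_g x hx).sub hasDeriv_shift).congr_deriv (by ring)

end CompletelyMonotoneUpTo

/-- The negative forward difference `k ↦ a k - a (k + 1)` of a sequence; with this sign, complete
monotonicity means nonnegativity of all iterates. -/
def negFwdDiff (a : ℕ → ℝ) (k : ℕ) : ℝ := a k - a (k + 1)

/-- Complete monotonicity of a sequence: all iterates of `negFwdDiff` are nonnegative. -/
def CompletelyMonotoneSeq (a : ℕ → ℝ) : Prop := ∀ j k, 0 ≤ negFwdDiff^[j] a k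

theorem CompletelyMonotoneUpTo.iterate_negFwdDiff_nonneg {j : ℕ} {g : ℝ → ℝ}
    (hg : CompletelyMonotoneUpTo j g) (k : ℕ) :
    0 ≤ negFwdDiff^[j] (fun k => g ((k : ℝ) + 1)) k := by
  induction j generalizing g with
  | zero => exact hg _ (by positivity)
  | succ j ih =>
    have diff_eq : negFwdDiff (fun k => g ((k : ℝ) + 1)) =
        fun k : ℕ => g ((k : ℝ) + 1) - g ((k : ℝ) + 1 + 1) := by
      ext i
      simp only [negFwdDiff, Nat.cast_add_one]
    rw [Function.iterate_succ_apply, diff_eq]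
    exact ih hg.sub_comp_add_one

namespace CompletelyMonotoneSeq

variable {a : ℕ → ℝ}

theorem nonneg (ha : CompletelyMonotoneSeq a) (k : ℕ) : 0 ≤ a k := ha 0 k

theorem diff (ha : CompletelyMonotoneSeq a) : CompletelyMonotoneSeq (negFwdDiff a) :=
  fun j => ha (j + 1)

theorem comp_succ (ha : CompletelyMonotoneSeq a) : CompletelyMonotoneSeq (fun k => a (k + 1)) := by
  have iterate_comp_succ (j : ℕ) : ∀ a : ℕ → ℝ, negFwdDiff^[j] (fun k => a (k + 1)) =
      fun k => negFwdDiff^[j] a (k + 1) := by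
    induction j with
    | zero => exact fun a => rfl
    | succ _ ih => exact fun a => ih (negFwdDiff a)
  intro j k
  rw [iterate_comp_succ]
  exact ha j (k + 1)

end CompletelyMonotoneSeq

end CompleteMonotonicity

section EulerTransform

/-- The operator `E - 1/2`, `E` being the shift; its iterates at `0` are the coefficients of the
Euler transform of a power series. -/
noncomputable def halfDiff : Module.End ℝ (ℕ → ℝ) where
  toFun a k := a (k + 1) - a k / 2
  map_add' a b := by ext k; simp only [Pi.add_apply]; ring
  map_smul' c a := by ext k; simp only [Pi.smul_apply, smul_eq_mul, RingHom.id_apply]; ring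

variable {a : ℕ → ℝ} {z : ℂ}

theorem halfDiff_apply (a : ℕ → ℝ) (k : ℕ) : halfDiff a k = a (k + 1) - a k / 2 := rfl

/- `E - 1/2 = (E - (1 - E)) / 2`, and both `E` and `1 - E` preserve complete monotonicity. -/
theorem CompletelyMonotoneSeq.abs_halfDiff_pow_le (ha : CompletelyMonotoneSeq a) (j k : ℕ) :
    |(halfDiff ^ j) a k| ≤ (1 / 2) ^ j * a k := by
  induction j generalizing a with
  | zero => simp [abs_of_nonneg (ha.nonneg k)]
  | succ j ih =>
    have halfDiff_eq :
        halfDiff a = (1 / 2 : ℝ) • ((fun k => a (k + 1)) - negFwdDiff a) := by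
      ext i
      simp only [halfDiff_apply, Pi.smul_apply, Pi.sub_apply, negFwdDiff, smul_eq_mul]
      ring
    calc |(halfDiff ^ (j + 1)) a k|
        = 1 / 2 * |(halfDiff ^ j) (fun k => a (k + 1)) k
            - (halfDiff ^ j) (negFwdDiff a) k| := by
          rw [pow_succ, Module.End.mul_apply, halfDiff_eq, map_smul, map_sub, Pi.smul_apply,
            Pi.sub_apply, smul_eq_mul, abs_mul, abs_of_pos one_half_pos]
      _ ≤ 1 / 2 * ((1 / 2) ^ j * a (k + 1) + (1 / 2) ^ j * negFwdDiff a k) := by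
          gcongr
          exact (abs_sub _ _).trans (add_le_add (ih ha.comp_succ) (ih ha.diff))
      _ = (1 / 2) ^ (j + 1) * a k := by
          rw [negFwdDiff]
          ring

theorem summable_ofReal_mul_pow (ha : Summable a) (hz : ‖z‖ ≤ 1) :
    Summable (fun k => (a k : ℂ) * z ^ k) := by
  refine Summable.of_norm_bounded ha.abs fun k => ?_
  rw [norm_mul, norm_pow, Complex.norm_real, Real.norm_eq_abs]
  exact mul_le_of_le_one_right (abs_nonneg _) (pow_le_one₀ (norm_nonneg _) hz)

theorem summable_halfDiff_pow (ha : Summable a) (N : ℕ) : Summable ((halfDiff ^ N) a) := by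
  induction N with
  | zero => exact ha
  | succ N ih =>
    rw [pow_succ', Module.End.mul_apply]
    exact ((summable_nat_add_iff 1).2 ih).sub (ih.div_const 2)

theorem one_sub_half_ne_zero (hz : ‖z‖ ≤ 1) : 1 - z / 2 ≠ 0 := by
  intro h
  obtain rfl : z = 2 := by linear_combination -2 * h
  norm_num at hz

theorem one_sub_half_mul_tsum (ha : Summable a) (hz : ‖z‖ ≤ 1) :
    (1 - z / 2) * ∑' k, (a k : ℂ) * z ^ k = a 0 + z * ∑' k, (halfDiff a k : ℂ) * z ^ k := by
  have summable_z := summable_ofReal_mul_pow ha hz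
  have summable_succ := (summable_nat_add_iff 1).2 summable_z
  have split_first : ∑' k, (a k : ℂ) * z ^ k = a 0 + ∑' k, (a (k + 1) : ℂ) * z ^ (k + 1) := by
    rw [summable_z.tsum_eq_zero_add, pow_zero, mul_one]
  have split_halfDiff : z * ∑' k, (halfDiff a k : ℂ) * z ^ k =
      (∑' k, (a (k + 1) : ℂ) * z ^ (k + 1)) - z / 2 * ∑' k, (a k : ℂ) * z ^ k := by
    rw [← tsum_mul_left, ← tsum_mul_left, ← summable_succ.tsum_sub (summable_z.mul_left _)]
    congr 1
    ext k
    rw [halfDiff_apply]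
    push_cast
    ring
  rw [split_halfDiff]
  linear_combination split_first

theorem tsum_eq_eulerTransform_partial (ha : Summable a) (hz : ‖z‖ ≤ 1) (N : ℕ) :
    ∑' k, (a k : ℂ) * z ^ k =
      (1 - z / 2)⁻¹ * ∑ j ∈ Finset.range N, ((halfDiff ^ j) a 0 : ℂ) * (z / (1 - z / 2)) ^ j +
        (z / (1 - z / 2)) ^ N * ∑' k, ((halfDiff ^ N) a k : ℂ) * z ^ k := by
  have ne_zero := one_sub_half_ne_zero hz
  induction N with
  | zero => simp
  | succ N ih =>
    have step := one_sub_half_mul_tsum (summable_halfDiff_pow ha N) hz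
    rw [← Module.End.mul_apply, ← pow_succ'] at step
    rw [ih, Finset.sum_range_succ, eq_div_of_mul_eq ne_zero ((mul_comm _ _).trans step), pow_succ]
    field_simp
    ring

theorem CompletelyMonotoneSeq.norm_tsum_halfDiff_pow_le (ha : CompletelyMonotoneSeq a)
    (hs : Summable a) (hz : ‖z‖ ≤ 1) (N : ℕ) :
    ‖∑' k, ((halfDiff ^ N) a k : ℂ) * z ^ k‖ ≤ (1 / 2) ^ N * ∑' k, a k := by
  rw [← tsum_mul_left]
  refine tsum_of_norm_bounded (hs.mul_left _).hasSum fun k => ?_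
  rw [norm_mul, norm_pow, Complex.norm_real, Real.norm_eq_abs]
  exact (mul_le_of_le_one_right (abs_nonneg _) (pow_le_one₀ (norm_nonneg _) hz)).trans
    (ha.abs_halfDiff_pow_le N k)

theorem CompletelyMonotoneSeq.tsum_eq_eulerTransform (ha : CompletelyMonotoneSeq a)
    (hs : Summable a) (hz : ‖z‖ ≤ 1) (hw : ‖z / (1 - z / 2)‖ < 2) :
    ∑' k, (a k : ℂ) * z ^ k =
      (1 - z / 2)⁻¹ * ∑' j, ((halfDiff ^ j) a 0 : ℂ) * (z / (1 - z / 2)) ^ j := by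
  set w := z / (1 - z / 2)
  have ratio_lt : ‖w‖ / 2 < 1 := by linarith
  have ratio_nonneg : 0 ≤ ‖w‖ / 2 := by positivity
  have summable_euler : Summable (fun j => ((halfDiff ^ j) a 0 : ℂ) * w ^ j) := by
    refine .of_norm_bounded ((summable_geometric_of_lt_one ratio_nonneg ratio_lt).mul_left (a 0))
      fun j => ?_
    rw [norm_mul, norm_pow, Complex.norm_real, Real.norm_eq_abs]
    calc _ ≤ (1 / 2) ^ j * a 0 * ‖w‖ ^ j := by gcongr; exact ha.abs_halfDiff_pow_le j 0
      _ = _ := by ring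
  have remainder_tendsto :
      Tendsto (fun N => w ^ N * ∑' k, ((halfDiff ^ N) a k : ℂ) * z ^ k) atTop (nhds 0) := by
    refine squeeze_zero_norm (a := fun N => (‖w‖ / 2) ^ N * ∑' k, a k) (fun N => ?_) ?_
    · rw [norm_mul, norm_pow]
      calc _ ≤ ‖w‖ ^ N * ((1 / 2) ^ N * ∑' k, a k) := by
            gcongr; exact ha.norm_tsum_halfDiff_pow_le hs hz N
        _ = _ := by ring
    · simpa using (tendsto_pow_atTop_nhds_zero_of_lt_one ratio_nonneg ratio_lt).mul_const _
  have partial_tendsto := (summable_euler.hasSum.tendsto_sum_nat.const_mul (1 - z / 2)⁻¹).add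
    remainder_tendsto
  rw [add_zero] at partial_tendsto
  exact tendsto_nhds_unique
    (tendsto_const_nhds.congr fun N => tsum_eq_eulerTransform_partial hs hz N) partial_tendsto

theorem norm_div_one_sub_half_lt_two (hz : ‖z‖ = 1) (hz1 : z ≠ 1) : ‖z / (1 - z / 2)‖ < 2 := by
  have sq_add_sq : z.re ^ 2 + z.im ^ 2 = 1 := by
    rw [← one_pow 2, ← hz, Complex.sq_norm, Complex.normSq_apply]
    ring
  have re_lt_one : z.re < 1 := by
    refine lt_of_le_of_ne (by nlinarith [sq_nonneg z.im]) fun h => hz1 (Complex.ext h ?_)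
    simpa [h] using sq_add_sq
  have sq_lt : (1 / 2) ^ 2 < ‖1 - z / 2‖ ^ 2 := by
    rw [Complex.sq_norm, Complex.normSq_apply]
    simp only [Complex.sub_re, Complex.one_re, Complex.div_ofNat_re, Complex.sub_im, Complex.one_im,
      Complex.div_ofNat_im]
    nlinarith
  have half_lt : 1 / 2 < ‖1 - z / 2‖ := lt_of_pow_lt_pow_left₀ 2 (norm_nonneg _) sq_lt
  rw [norm_div, hz, div_lt_iff₀ (by linarith)]
  linarith

theorem analyticAt_tsum_mul_pow {b : ℕ → ℂ} {C ρ : ℝ} (hρ : 0 ≤ ρ) (hb : ∀ j, ‖b j‖ ≤ C * ρ ^ j)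
    {w : ℂ} (hw : ‖w‖ * ρ < 1) : AnalyticAt ℂ (fun w => ∑' j, b j * w ^ j) w := by
  obtain ⟨s, hws, hs⟩ : ∃ s, ‖w‖ < s ∧ s * ρ < 1 :=
    ((eventually_mem_nhdsWithin (s := Set.Ioi ‖w‖)).and <|
      (((continuous_mul_const ρ).tendsto ‖w‖).eventually_lt_const hw).filter_mono
        nhdsWithin_le_nhds).exists
  have hs₀ : 0 ≤ s := (norm_nonneg w).trans hws.le
  have differentiableOn : DifferentiableOn ℂ (fun w => ∑' j, b j * w ^ j) (Metric.ball 0 s) := by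
    refine Complex.differentiableOn_tsum_of_summable_norm (u := fun j => C * (s * ρ) ^ j)
      ((summable_geometric_of_lt_one (by positivity) hs).mul_left C) (fun j => by fun_prop)
      Metric.isOpen_ball fun j v hv => ?_
    have norm_le : ‖v‖ ≤ s := (mem_ball_zero_iff.1 hv).le
    rw [norm_mul, norm_pow]
    calc ‖b j‖ * ‖v‖ ^ j ≤ C * ρ ^ j * s ^ j := by
          gcongr
          · exact (norm_nonneg _).trans (hb j)
          · exact hb j
      _ = C * (s * ρ) ^ j := by ring
  exact differentiableOn.analyticAt (Metric.isOpen_ball.mem_nhds (mem_ball_zero_iff.2 hws))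

theorem CompletelyMonotoneSeq.exists_analyticAt_eq_tsum (ha : CompletelyMonotoneSeq a)
    (hs : Summable a) : ∃ G : ℂ → ℂ, ∀ z : ℂ, ‖z‖ = 1 → z ≠ 1 →
      AnalyticAt ℂ G z ∧ G z = ∑' k, (a k : ℂ) * z ^ k := by
  refine ⟨fun z => (1 - z / 2)⁻¹ * ∑' j, ((halfDiff ^ j) a 0 : ℂ) * (z / (1 - z / 2)) ^ j,
    fun z hz hz1 => ⟨?_, ?_⟩⟩
  · have ne_zero := one_sub_half_ne_zero hz.le
    have coeff_le (j : ℕ) : ‖((halfDiff ^ j) a 0 : ℂ)‖ ≤ a 0 * (1 / 2) ^ j := by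
      rw [Complex.norm_real, Real.norm_eq_abs, mul_comm]
      exact ha.abs_halfDiff_pow_le j 0
    have analyticAt_series := analyticAt_tsum_mul_pow (by positivity) coeff_le
      (w := z / (1 - z / 2)) (by linarith [norm_div_one_sub_half_lt_two hz hz1])
    have analyticAt_w : AnalyticAt ℂ (fun z : ℂ => z / (1 - z / 2)) z := by
      fun_prop (disch := assumption)
    have analyticAt_inv : AnalyticAt ℂ (fun z : ℂ => (1 - z / 2)⁻¹) z := by
      fun_prop (disch := assumption)
    exact analyticAt_inv.mul
      (analyticAt_series.comp_of_eq (f := fun z : ℂ => z / (1 - z / 2)) analyticAt_w rfl)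
  · exact (ha.tsum_eq_eulerTransform hs hz.le (norm_div_one_sub_half_lt_two hz hz1)).symm

end EulerTransform

section ExpSeries

/-- The power series with real coefficients `b k` on the unit circle, `t ↦ Σ b k e^{ikt}`. -/
noncomputable def expSeries (b : ℕ → ℝ) (t : ℝ) : ℂ :=
  ∑' k : ℕ, (b k : ℂ) * Complex.exp (Complex.I * (k : ℂ) * (t : ℂ))

variable {b : ℕ → ℝ}

theorem norm_exp_I_mul_natCast_mul (k : ℕ) (t : ℝ) :
    ‖Complex.exp (Complex.I * (k : ℂ) * (t : ℂ))‖ = 1 := by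
  simpa [mul_assoc] using Complex.norm_exp_I_mul_ofReal (k * t)

theorem expSeries_eq_tsum_pow (b : ℕ → ℝ) (t : ℝ) :
    expSeries b t = ∑' k, (b k : ℂ) * Complex.exp (Complex.I * t) ^ k := by
  refine tsum_congr fun k => ?_
  rw [← Complex.exp_nat_mul]
  ring_nf

theorem hasSum_expSeries (hb : Summable b) (t : ℝ) :
    HasSum (fun k : ℕ => (b k : ℂ) * Complex.exp (Complex.I * (k : ℂ) * (t : ℂ)))
      (expSeries b t) := by
  refine (Summable.of_norm_bounded hb.abs fun k => ?_).hasSum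
  rw [norm_mul, norm_exp_I_mul_natCast_mul, mul_one, Complex.norm_real, Real.norm_eq_abs]

theorem periodic_expSeries (b : ℕ → ℝ) : Function.Periodic (expSeries b) (2 * π) := by
  intro t
  have exp_eq : Complex.exp (Complex.I * ((t + 2 * π : ℝ) : ℂ)) = Complex.exp (Complex.I * t) := by
    rw [Complex.ofReal_add, mul_add, Complex.exp_add,
      show Complex.I * ((2 * π : ℝ) : ℂ) = 2 * π * Complex.I by push_cast; ring,
      Complex.exp_two_pi_mul_I, mul_one]
  rw [expSeries_eq_tsum_pow, expSeries_eq_tsum_pow, exp_eq]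

theorem norm_deriv_term_expSeries (b : ℕ → ℝ) (k : ℕ) (t : ℝ) :
    ‖(b k : ℂ) * (Complex.exp (Complex.I * (k : ℂ) * (t : ℂ)) * (Complex.I * k))‖ =
      |k * b k| := by
  rw [norm_mul, norm_mul, norm_exp_I_mul_natCast_mul, one_mul, norm_mul, Complex.norm_I, one_mul,
    Complex.norm_natCast, Complex.norm_real, Real.norm_eq_abs, abs_mul, Nat.abs_cast, mul_comm]

theorem hasDerivAt_expSeries (hb : Summable b) (hkb : Summable fun k : ℕ => k * b k) (t : ℝ) :
    HasDerivAt (expSeries b)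
      (∑' k : ℕ, (b k : ℂ) * (Complex.exp (Complex.I * (k : ℂ) * (t : ℂ)) * (Complex.I * k)))
      t := by
  refine hasDerivAt_tsum hkb.abs
    (g := fun (k : ℕ) (t : ℝ) => (b k : ℂ) * Complex.exp (Complex.I * (k : ℂ) * (t : ℂ)))
    (fun k y => ?_) (fun k y => (norm_deriv_term_expSeries b k y).le)
    (hasSum_expSeries hb 0).summable t
  have hasDerivAt_phase :
      HasDerivAt (fun t : ℝ => Complex.I * (k : ℂ) * (t : ℂ)) (Complex.I * (k : ℂ)) y := by
    simpa using (Complex.ofRealCLM.hasDerivAt (x := y)).const_mul (Complex.I * (k : ℂ))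
  exact hasDerivAt_phase.cexp.const_mul _

theorem differentiable_expSeries (hb : Summable b) (hkb : Summable fun k : ℕ => k * b k) :
    Differentiable ℝ (expSeries b) :=
  fun t => (hasDerivAt_expSeries hb hkb t).differentiableAt

theorem continuous_deriv_expSeries (hb : Summable b) (hkb : Summable fun k : ℕ => k * b k) :
    Continuous (deriv (expSeries b)) := by
  rw [funext fun t => (hasDerivAt_expSeries hb hkb t).deriv]
  exact continuous_tsum (fun k => by fun_prop) hkb.abs
    fun k t => (norm_deriv_term_expSeries b k t).le

/-- The real part of `e^{i(nt-θ)} P(t)`. For `P = 𝒫_{α,r,n}` this is the remainder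
`Σ_{k≥n} e^{-αk^r} cos(kt-θ)` of the generalized Poisson kernel. -/
noncomputable def modulate (n : ℕ) (θ : ℝ) (P : ℝ → ℂ) (t : ℝ) : ℝ :=
  (Complex.exp (Complex.I * ((n * t - θ : ℝ) : ℂ)) * P t).re

theorem hasSum_modulate_expSeries (hb : Summable b) (n : ℕ) (θ t : ℝ) :
    HasSum (fun k : ℕ => b k * Real.cos (((k + n : ℕ) : ℝ) * t - θ))
      (modulate n θ (expSeries b) t) := by
  have hasSum_re := Complex.hasSum_re
    ((hasSum_expSeries hb t).mul_left (Complex.exp (Complex.I * ((n * t - θ : ℝ) : ℂ))))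
  refine hasSum_re.congr_fun fun k => ?_
  have phase_eq : Complex.I * ((n * t - θ : ℝ) : ℂ) + Complex.I * (k : ℂ) * (t : ℂ) =
      ((((k + n : ℕ) : ℝ) * t - θ : ℝ) : ℂ) * Complex.I := by
    push_cast
    ring
  rw [mul_left_comm, ← Complex.exp_add, Complex.re_ofReal_mul, phase_eq,
    Complex.exp_ofReal_mul_I_re]

theorem hasSum_re_expSeries (hb : Summable b) (t : ℝ) :
    HasSum (fun k : ℕ => b k * Real.cos (k * t)) (expSeries b t).re := by
  simpa [modulate] using hasSum_modulate_expSeries hb 0 0 t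

/- Real part of `b 0 - (1 - e^{it}) Σ b k e^{ikt} = Σ (b k - b (k + 1)) e^{i(k+1)t}`, subtracted
from the telescoping sum `b 0 = Σ (b k - b (k + 1))`. -/
theorem hasSum_sub_mul_one_sub_cos_of_expSeries_eq_zero (hb : Summable b) {t : ℝ}
    (hbt : expSeries b t = 0) :
    HasSum (fun k : ℕ => (b k - b (k + 1)) * (1 - Real.cos (((k + 1 : ℕ) : ℝ) * t))) 0 := by
  have hasSum_cos : HasSum (fun k : ℕ => b (k + 1) * Real.cos (((k + 1 : ℕ) : ℝ) * t)) (-b 0) := by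
    simpa [hbt] using (hasSum_nat_add_iff' 1).2 (hasSum_re_expSeries hb t)
  have hasSum_cos_succ : HasSum (fun k : ℕ => b k * Real.cos (((k + 1 : ℕ) : ℝ) * t)) 0 := by
    simpa [modulate, hbt] using hasSum_modulate_expSeries hb 1 0 t
  have hasSum_telescope : HasSum (fun k => b k - b (k + 1)) (b 0) := by
    simpa using hb.hasSum.sub ((hasSum_nat_add_iff' 1).2 hb.hasSum)
  have hasSum_diff := hasSum_telescope.sub (hasSum_cos_succ.sub hasSum_cos)
  rw [zero_sub, neg_neg, sub_self] at hasSum_diff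
  exact hasSum_diff.congr_fun fun k => by ring

theorem pos_of_strictAnti_of_summable (hb : Summable b) (hanti : StrictAnti b) (k : ℕ) : 0 < b k :=
  (hanti.antitone.le_of_tendsto hb.tendsto_atTop_zero (k + 1)).trans_lt (hanti k.lt_succ_self)

theorem expSeries_ne_zero (hb : Summable b) (hanti : StrictAnti b) (t : ℝ) :
    expSeries b t ≠ 0 := by
  intro hbt
  have cos_eq_one : Real.cos t = 1 := by
    have terms_eq_zero := (hasSum_zero_iff_of_nonneg fun k => mul_nonneg
      (sub_nonneg.2 (hanti k.lt_succ_self).le) (sub_nonneg.2 (Real.cos_le_one _))).1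
      (hasSum_sub_mul_one_sub_cos_of_expSeries_eq_zero hb hbt)
    have first_eq_zero := congrFun terms_eq_zero 0
    simp only [zero_add, Nat.cast_one, one_mul, Pi.zero_apply, mul_eq_zero,
      (sub_pos.2 (hanti zero_lt_one)).ne', false_or] at first_eq_zero
    linarith
  obtain ⟨m, rfl⟩ := (Real.cos_eq_one_iff t).1 cos_eq_one
  rw [(periodic_expSeries b).int_mul_eq m] at hbt
  have sum_eq_zero : HasSum b 0 := by simpa [hbt] using hasSum_re_expSeries hb 0
  have pos := pos_of_strictAnti_of_summable hb hanti
  exact (pos 0).ne' (congrFun ((hasSum_zero_iff_of_nonneg fun k => (pos k).le).1 sum_eq_zero) 0)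

theorem exists_deriv_expSeries_ne_zero (hb : Summable b) (hkb : Summable fun k : ℕ => k * b k)
    (hb₀ : ∀ k, 0 ≤ b k) (hb₁ : b 1 ≠ 0) : ∃ t, deriv (expSeries b) t ≠ 0 := by
  by_contra! deriv_eq_zero
  have hasSum_diff := (hasSum_re_expSeries hb 0).sub (hasSum_re_expSeries hb π)
  rw [is_const_of_deriv_eq_zero (differentiable_expSeries hb hkb) deriv_eq_zero 0 π,
    sub_self] at hasSum_diff
  have terms_eq_zero := (hasSum_zero_iff_of_nonneg fun k => ?_).1 hasSum_diff
  · have := congrFun terms_eq_zero 1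
    norm_num [hb₁] at this
  · rw [← mul_sub, mul_zero, Real.cos_zero]
    exact mul_nonneg (hb₀ k) (sub_nonneg.2 (Real.cos_le_one _))

theorem exp_I_mul_ne_one {t : ℝ} (ht : t ∈ Set.Ioo 0 (2 * π)) :
    Complex.exp (Complex.I * t) ≠ 1 := by
  intro h
  have cos_eq_one : Real.cos t = 1 := by
    rw [← Complex.exp_ofReal_mul_I_re, mul_comm, h, Complex.one_re]
  exact ht.1.ne' <| (Real.cos_eq_one_iff_of_lt_of_lt (by linarith [ht.1, Real.pi_pos]) ht.2).1
    cos_eq_one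

theorem analyticOnNhd_modulate_expSeries {G : ℂ → ℂ}
    (hG : ∀ z : ℂ, ‖z‖ = 1 → z ≠ 1 → AnalyticAt ℂ G z ∧ G z = ∑' k, (b k : ℂ) * z ^ k)
    (n : ℕ) (θ : ℝ) : AnalyticOnNhd ℝ (modulate n θ (expSeries b)) (Set.Ioo 0 (2 * π)) := by
  intro t ht
  have analyticAt_exp_I {u : ℝ → ℝ} (hu : AnalyticAt ℝ u t) :
      AnalyticAt ℝ (fun t => Complex.exp (Complex.I * (u t : ℂ))) t := by
    have analyticAt_exp : AnalyticAt ℂ (fun z => Complex.exp (Complex.I * z)) (u t) := by fun_prop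
    exact (analyticAt_exp.restrictScalars (𝕜 := ℝ)).comp_of_eq
      ((Complex.ofRealCLM.analyticAt (u t)).comp_of_eq hu rfl) rfl
  have hGt := hG _ (Complex.norm_exp_I_mul_ofReal t) (exp_I_mul_ne_one ht)
  have analyticAt_G : AnalyticAt ℝ (fun t : ℝ => G (Complex.exp (Complex.I * t))) t :=
    (hGt.1.restrictScalars (𝕜 := ℝ)).comp_of_eq (analyticAt_exp_I analyticAt_id) rfl
  have analyticAt_phase := analyticAt_exp_I (u := fun t => n * t - θ) (by fun_prop)
  refine ((Complex.reCLM.analyticAt _).comp (analyticAt_phase.mul analyticAt_G)).congr ?_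
  filter_upwards [isOpen_Ioo.mem_nhds ht] with u hu
  have hGu := hG _ (Complex.norm_exp_I_mul_ofReal u) (exp_I_mul_ne_one hu)
  simp [modulate, expSeries_eq_tsum_pow, ← hGu.2]

end ExpSeries

section PeriodMeasure

/-- Lebesgue measure on the period `(-π, π]`. -/
noncomputable abbrev periodMeasure : Measure ℝ := volume.restrict (Set.Ioc (-π) π)

theorem periodMeasure_eq_restrict_Ioc_add :
    periodMeasure = volume.restrict (Set.Ioc (-π) (-π + 2 * π)) := by
  rw [periodMeasure, show -π + 2 * π = π by ring]

theorem memLp_periodMeasure_of_continuous {E : Type*} [NormedAddCommGroup E] {g : ℝ → E}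
    (hg : Continuous g) (p : ℝ≥0∞) : MemLp g p periodMeasure := by
  obtain ⟨C, hC⟩ := (isCompact_Icc (a := -π) (b := π)).exists_bound_of_continuousOn hg.continuousOn
  refine MemLp.of_bound hg.aestronglyMeasurable C ?_
  filter_upwards [ae_restrict_mem measurableSet_Ioc] with t ht
  exact hC t (Set.Ioc_subset_Icc_self ht)

variable {E : Type*} [NormedAddCommGroup E] {g : ℝ → E}

theorem eLpNorm_comp_add_right_periodMeasure (hg : Function.Periodic g (2 * π))
    (hm : AEStronglyMeasurable g periodMeasure) (c : ℝ) (p : ℝ≥0∞) :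
    eLpNorm (fun t => g (t + c)) p periodMeasure = eLpNorm g p periodMeasure := by
  rw [periodMeasure_eq_restrict_Ioc_add] at hm ⊢
  exact eLpNorm_comp_add_right_of_periodic hg Real.two_pi_pos hm _ c p

theorem lpNorm_comp_add_right_periodMeasure (hg : Function.Periodic g (2 * π))
    (hm : AEStronglyMeasurable g periodMeasure) (c : ℝ) (p : ℝ≥0∞) :
    lpNorm (fun t => g (t + c)) p periodMeasure = lpNorm g p periodMeasure := by
  rw [periodMeasure_eq_restrict_Ioc_add] at hm ⊢
  exact lpNorm_comp_add_right_of_periodic hg Real.two_pi_pos hm _ c p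

theorem lpNorm_comp_sub_left_periodMeasure (hg : Function.Periodic g (2 * π))
    (hm : AEStronglyMeasurable g periodMeasure) (c : ℝ) (p : ℝ≥0∞) :
    lpNorm (fun t => g (c - t)) p periodMeasure = lpNorm g p periodMeasure := by
  rw [periodMeasure_eq_restrict_Ioc_add] at hm ⊢
  exact lpNorm_comp_sub_left_of_periodic hg Real.two_pi_pos hm _ c p

theorem eLpNorm_restrict_Ioc_zero_two_pi (hg : Function.Periodic g (2 * π))
    (hm : AEStronglyMeasurable g periodMeasure) (p : ℝ≥0∞) :
    eLpNorm g p (volume.restrict (Set.Ioc 0 (2 * π))) = eLpNorm g p periodMeasure := by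
  rw [periodMeasure_eq_restrict_Ioc_add] at hm ⊢
  simpa using eLpNorm_comp_add_right_of_periodic hg Real.two_pi_pos hm 0 0 p

theorem cosNorm_eq_toReal_eLpNorm_periodMeasure (q : ℝ≥0∞) :
    cosNorm q = (eLpNorm Real.cos q periodMeasure).toReal := by
  rw [cosNorm, eLpNorm_restrict_Ioc_zero_two_pi Real.cos_periodic (by fun_prop)]

end PeriodMeasure

section PhaseAverage

variable {X : Type*} [MeasurableSpace X] {μ : Measure X} {A c : X → ℝ} {q : ℝ≥0∞}

theorem lintegral_eLpNorm_mul_cos_rpow [SFinite μ] (hA : Measurable A) (hc : Measurable c)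
    (hq₀ : q ≠ 0) (hq : q ≠ ∞) :
    ∫⁻ s, eLpNorm (fun x => A x * Real.cos (s + c x)) q μ ^ q.toReal ∂periodMeasure =
      (eLpNorm A q μ * eLpNorm Real.cos q periodMeasure) ^ q.toReal := by
  have inner_eq (x : X) : ∫⁻ s, ‖A x * Real.cos (s + c x)‖ₑ ^ q.toReal ∂periodMeasure =
      ‖A x‖ₑ ^ q.toReal * eLpNorm Real.cos q periodMeasure ^ q.toReal := by
    have cos_shift := eLpNorm_comp_add_right_periodMeasure Real.cos_periodic
      (by fun_prop) (c x) q
    simp_rw [enorm_mul, ENNReal.mul_rpow_of_nonneg _ _ ENNReal.toReal_nonneg]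
    rw [lintegral_const_mul _ (by fun_prop),
      lintegral_enorm_rpow_eq_eLpNorm_rpow hq₀ hq fun s => Real.cos (s + c x), cos_shift]
  simp_rw [← lintegral_enorm_rpow_eq_eLpNorm_rpow hq₀ hq]
  rw [lintegral_lintegral_swap (by fun_prop)]
  simp_rw [inner_eq]
  rw [lintegral_mul_const _ (by fun_prop), lintegral_enorm_rpow_eq_eLpNorm_rpow hq₀ hq,
    ENNReal.mul_rpow_of_nonneg _ _ ENNReal.toReal_nonneg]

theorem eLpNorm_top_le_of_forall_mul_cos {U : ℝ≥0∞}
    (hU : ∀ s, eLpNorm (fun x => A x * Real.cos (s + c x)) ∞ μ ≤ U) : eLpNorm A ∞ μ ≤ U := by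
  rw [eLpNorm_exponent_top]
  have ae_rat : ∀ᵐ x ∂μ, ∀ s : ℚ, ‖A x * Real.cos (s + c x)‖ₑ ≤ U := by
    refine ae_all_iff.2 fun s => ?_
    filter_upwards [enorm_ae_le_eLpNormEssSup (fun x => A x * Real.cos (s + c x)) μ] with x hx
    exact hx.trans (by simpa using hU s)
  refine essSup_le_of_ae_le _ ?_
  filter_upwards [ae_rat] with x hx
  have hx_real (s : ℝ) : ‖A x * Real.cos (s + c x)‖ₑ ≤ U :=
    Rat.denseRange_cast.induction_on s (isClosed_le (by fun_prop) continuous_const) hx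
  simpa using hx_real (-c x)

theorem eLpNorm_top_mul_cos_le (A c : X → ℝ) (s : ℝ) :
    eLpNorm (fun x => A x * Real.cos (s + c x)) ∞ μ ≤ eLpNorm A ∞ μ := by
  refine eLpNorm_mono fun x => ?_
  rw [norm_mul]
  exact mul_le_of_le_one_right (norm_nonneg _) (Real.abs_cos_le_one _)

theorem periodMeasure_univ : periodMeasure Set.univ = ENNReal.ofReal (2 * π) := by
  rw [Measure.restrict_apply_univ, Real.volume_Ioc, sub_neg_eq_add, two_mul]

theorem eLpNorm_top_cos_periodMeasure : eLpNorm Real.cos ∞ periodMeasure = 1 := by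
  have eLpNorm_one : eLpNorm (fun _ : ℝ => (1 : ℝ)) ∞ periodMeasure = 1 := by
    have : periodMeasure ≠ 0 := by simp [Real.pi_pos]
    simp [eLpNorm_const _ ENNReal.top_ne_zero this]
  rw [← eLpNorm_one]
  apply le_antisymm
  · simpa using eLpNorm_top_mul_cos_le (fun _ => 1) id 0
  · refine eLpNorm_top_le_of_forall_mul_cos (c := id) fun s => ?_
    simpa [add_comm] using
      (eLpNorm_comp_add_right_periodMeasure Real.cos_periodic (by fun_prop) s ∞).le

theorem lintegral_const_rpow_periodMeasure (U : ℝ≥0∞) {x : ℝ} (hx : 0 < x) :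
    ∫⁻ _, U ^ x ∂periodMeasure = (U * ENNReal.ofReal (2 * π) ^ (1 / x)) ^ x := by
  rw [lintegral_const, periodMeasure_univ, ENNReal.mul_rpow_of_nonneg _ _ hx.le,
    ← ENNReal.rpow_mul, one_div_mul_cancel hx.ne', ENNReal.rpow_one]

theorem eLpNorm_mul_eLpNorm_cos_le [SFinite μ] (hA : Measurable A) (hc : Measurable c)
    (hq₀ : q ≠ 0) {U : ℝ≥0∞} (hU : ∀ s, eLpNorm (fun x => A x * Real.cos (s + c x)) q μ ≤ U) :
    eLpNorm A q μ * eLpNorm Real.cos q periodMeasure ≤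
      U * ENNReal.ofReal (2 * π) ^ (1 / q.toReal) := by
  rcases eq_or_ne q ∞ with rfl | hq
  · rw [eLpNorm_top_cos_periodMeasure]
    simpa using eLpNorm_top_le_of_forall_mul_cos hU
  have hq_pos := ENNReal.toReal_pos hq₀ hq
  rw [← ENNReal.rpow_le_rpow_iff hq_pos, ← lintegral_eLpNorm_mul_cos_rpow hA hc hq₀ hq,
    ← lintegral_const_rpow_periodMeasure U hq_pos]
  exact lintegral_mono fun s => ENNReal.rpow_le_rpow (hU s) hq_pos.le

theorem le_eLpNorm_mul_eLpNorm_cos [SFinite μ] (hA : Measurable A) (hc : Measurable c)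
    (hq₀ : q ≠ 0) {L : ℝ≥0∞} (hL : ∀ s, L ≤ eLpNorm (fun x => A x * Real.cos (s + c x)) q μ) :
    L * ENNReal.ofReal (2 * π) ^ (1 / q.toReal) ≤
      eLpNorm A q μ * eLpNorm Real.cos q periodMeasure := by
  rcases eq_or_ne q ∞ with rfl | hq
  · rw [eLpNorm_top_cos_periodMeasure]
    simpa using (hL 0).trans (eLpNorm_top_mul_cos_le A c 0)
  have hq_pos := ENNReal.toReal_pos hq₀ hq
  rw [← ENNReal.rpow_le_rpow_iff hq_pos, ← lintegral_eLpNorm_mul_cos_rpow hA hc hq₀ hq,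
    ← lintegral_const_rpow_periodMeasure L hq_pos]
  exact lintegral_mono fun s => ENNReal.rpow_le_rpow (hL s) hq_pos.le

end PhaseAverage

section Modulate

variable {P : ℝ → ℂ} {n : ℕ}

theorem continuous_modulate (hP : Continuous P) (n : ℕ) (θ : ℝ) :
    Continuous (modulate n θ P) := by
  unfold modulate
  fun_prop

theorem norm_exp_I_mul_mul (x : ℝ) (z : ℂ) : ‖Complex.exp (Complex.I * x) * z‖ = ‖z‖ := by
  rw [norm_mul, Complex.norm_exp_I_mul_ofReal, one_mul]

theorem abs_modulate_le (n : ℕ) (θ : ℝ) (P : ℝ → ℂ) (t : ℝ) : |modulate n θ P t| ≤ ‖P t‖ :=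
  (Complex.abs_re_le_norm _).trans (norm_exp_I_mul_mul _ _).le

theorem modulate_sub_eq_norm_mul_cos (n : ℕ) (θ s : ℝ) (P : ℝ → ℂ) (t : ℝ) :
    modulate n (θ - s) P t = ‖P t‖ * Real.cos (s + (n * t - θ + Complex.arg (P t))) := by
  have phase_eq : Complex.I * ((n * t - (θ - s) : ℝ) : ℂ) + Complex.arg (P t) * Complex.I =
      ((s + (n * t - θ + Complex.arg (P t)) : ℝ) : ℂ) * Complex.I := by
    push_cast
    ring
  rw [modulate]
  conv_lhs => rw [← Complex.norm_mul_exp_arg_mul_I (P t)]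
  rw [mul_left_comm, ← Complex.exp_add, Complex.re_ofReal_mul, phase_eq,
    Complex.exp_ofReal_mul_I_re]

theorem modulate_eq_norm_mul_cos (n : ℕ) (θ : ℝ) (P : ℝ → ℂ) (t : ℝ) :
    modulate n θ P t = ‖P t‖ * Real.cos (n * t - θ + Complex.arg (P t)) := by
  simpa using modulate_sub_eq_norm_mul_cos n θ 0 P t

theorem modulate_sub_pi (n : ℕ) (θ : ℝ) (P : ℝ → ℂ) (t : ℝ) :
    modulate n (θ - π) P t = -modulate n θ P t := by
  rw [modulate_sub_eq_norm_mul_cos, modulate_eq_norm_mul_cos, add_comm π, Real.cos_add_pi,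
    mul_neg]

theorem periodic_modulate (hP : Function.Periodic P (2 * π)) (n : ℕ) (θ : ℝ) :
    Function.Periodic (modulate n θ P) (2 * π) := by
  intro t
  rw [modulate_eq_norm_mul_cos, modulate_eq_norm_mul_cos, hP t,
    ← Real.cos_add_nat_mul_two_pi (n * t - θ + Complex.arg (P t)) n]
  ring_nf

theorem periodic_modulate_phase (n : ℕ) (P : ℝ → ℂ) (t : ℝ) :
    Function.Periodic (fun θ => modulate n θ P t) (2 * π) := by
  intro θ
  simp only [modulate_eq_norm_mul_cos]
  rw [← Real.cos_sub_two_pi (n * t - θ + Complex.arg (P t))]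
  ring_nf

theorem abs_modulate_add_div_sub_modulate_le (hn : n ≠ 0) (θ s : ℝ) (P : ℝ → ℂ) (t : ℝ) :
    |modulate n θ P (t + s / n) - modulate n (θ - s) P t| ≤ ‖P (t + s / n) - P t‖ := by
  have phase_eq : n * (t + s / n) - θ = n * t - (θ - s) := by
    field_simp
    ring
  rw [modulate, modulate, ← Complex.sub_re, phase_eq, ← mul_sub]
  exact (Complex.abs_re_le_norm _).trans (norm_exp_I_mul_mul _ _).le

end Modulate

section LogDerivBound

variable {E : Type*} [NormedAddCommGroup E] [NormedSpace ℝ E] {P : ℝ → E} {M : ℝ}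

theorem bddAbove_range_norm_deriv_div_norm {T : ℝ} (hPT : Function.Periodic P T) (hT : T ≠ 0)
    (hP : Differentiable ℝ P) (hP' : Continuous (deriv P)) (hP₀ : ∀ t, P t ≠ 0) :
    BddAbove (Set.range fun t => ‖deriv P t‖ / ‖P t‖) := by
  have periodic : Function.Periodic (fun t => ‖deriv P t‖ / ‖P t‖) T := fun t => by
    dsimp only
    rw [hPT t, ← deriv_comp_add_const, hPT.funext]
  exact (periodic.compact_of_continuous hT <| hP'.norm.div hP.continuous.norm
    fun t => norm_ne_zero_iff.2 (hP₀ t)).bddAbove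

-- Grönwall's inequality for `h ↦ P (t + h) - P t`.
theorem norm_add_sub_le_of_norm_deriv_le (hM : 0 < M) (hP : Differentiable ℝ P)
    (hPM : ∀ t, ‖deriv P t‖ ≤ M * ‖P t‖) (t : ℝ) {h : ℝ} (hh : 0 ≤ h) :
    ‖P (t + h) - P t‖ ≤ (Real.exp (M * h) - 1) * ‖P t‖ := by
  have gronwall := norm_le_gronwallBound_of_norm_deriv_right_le
    (f := fun u => P (t + u) - P t) (f' := fun u => deriv P (t + u))
    (δ := 0) (K := M) (ε := M * ‖P t‖) (a := 0) (b := h)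
    (by have := hP.continuous; fun_prop)
    (fun u _ => (((hP (t + u)).hasDerivAt.comp_const_add t u).sub_const _).hasDerivWithinAt)
    (by simp) ?_ h ⟨hh, le_rfl⟩
  · refine gronwall.trans_eq ?_
    simp only [gronwallBound_of_K_ne_0 hM.ne', sub_zero, zero_mul, zero_add]
    rw [mul_div_cancel_left₀ _ hM.ne', mul_comm]
  · intro u _
    calc ‖deriv P (t + u)‖ ≤ M * ‖P (t + u)‖ := hPM _
      _ ≤ M * (‖P (t + u) - P t‖ + ‖P t‖) := by
          gcongr
          exact norm_le_norm_sub_add _ _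
      _ = M * ‖P (t + u) - P t‖ + M * ‖P t‖ := mul_add _ _ _

end LogDerivBound

section PhaseMean

/-- The `L^q` mean over all phases `θ` of the norms `‖modulate n θ P‖_q`, in the closed form
`‖P‖_q ‖cos‖_q / (2π)^{1/q}` given by Fubini's theorem. For `q = ∞` the denominator is `1`, since
`1 / ∞.toReal = 0`. -/
noncomputable def phaseMean (q : ℝ≥0∞) (P : ℝ → ℂ) : ℝ :=
  lpNorm P q periodMeasure * cosNorm q / (2 * π) ^ (1 / q.toReal)

variable {P : ℝ → ℂ} {M : ℝ} {n : ℕ} {q : ℝ≥0∞}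

theorem abs_modulate_add_div_sub_modulate_le_of_norm_deriv_le (hM : 0 < M) (hP : Differentiable ℝ P)
    (hPM : ∀ t, ‖deriv P t‖ ≤ M * ‖P t‖) (hn : n ≠ 0) (θ t : ℝ) {s s₀ : ℝ} (hs : 0 ≤ s)
    (hs₀ : s ≤ s₀) :
    |modulate n θ P (t + s / n) - modulate n (θ - s) P t| ≤
      (Real.exp (M * (s₀ / n)) - 1) * ‖P t‖ :=
  calc |modulate n θ P (t + s / n) - modulate n (θ - s) P t| ≤ ‖P (t + s / n) - P t‖ :=
        abs_modulate_add_div_sub_modulate_le hn θ s P t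
    _ ≤ (Real.exp (M * (s / n)) - 1) * ‖P t‖ :=
        norm_add_sub_le_of_norm_deriv_le hM hP hPM t (by positivity)
    _ ≤ (Real.exp (M * (s₀ / n)) - 1) * ‖P t‖ := by gcongr

theorem lpNorm_modulate_le_add (hM : 0 < M) (hP : Differentiable ℝ P)
    (hPM : ∀ t, ‖deriv P t‖ ≤ M * ‖P t‖) (hPT : Function.Periodic P (2 * π)) (hn : n ≠ 0)
    (hq : 1 ≤ q) (θ θ' : ℝ) :
    lpNorm (modulate n θ' P) q periodMeasure ≤ lpNorm (modulate n θ P) q periodMeasure +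
      (Real.exp (M * (2 * π / n)) - 1) * lpNorm P q periodMeasure := by
  obtain ⟨s, hs, hsθ⟩ : ∃ s ∈ Set.Ico 0 (2 * π), modulate n θ' P = modulate n (θ - s) P := by
    refine ⟨toIcoMod Real.two_pi_pos 0 (θ - θ'), by simpa using toIcoMod_mem_Ico _ 0 (θ - θ'), ?_⟩
    funext t
    rw [toIcoMod, ← sub_add, sub_sub_cancel]
    exact ((periodic_modulate_phase n P t).zsmul _ θ').symm
  have continuous_mod (θ : ℝ) := continuous_modulate hP.continuous n θ
  rw [hsθ, ← lpNorm_comp_add_right_periodMeasure (periodic_modulate hPT n θ)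
    (continuous_mod θ).aestronglyMeasurable (s / n)]
  refine lpNorm_le_add_mul_lpNorm hq
    (memLp_periodMeasure_of_continuous ((continuous_mod θ).comp (continuous_add_const _)) q)
    (memLp_periodMeasure_of_continuous hP.continuous q)
    (sub_nonneg.2 (Real.one_le_exp (by positivity))) fun t => ?_
  have := abs_modulate_add_div_sub_modulate_le_of_norm_deriv_le hM hP hPM hn θ t hs.1 hs.2.le
  rw [abs_sub_comm] at this
  simp only [Real.norm_eq_abs, Function.comp_apply]
  linarith [abs_sub_abs_le_abs_sub (modulate n (θ - s) P t) (modulate n θ P (t + s / n))]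

theorem phaseMean_nonneg (q : ℝ≥0∞) (P : ℝ → ℂ) : 0 ≤ phaseMean q P :=
  div_nonneg (mul_nonneg lpNorm_nonneg ENNReal.toReal_nonneg) (by positivity)

theorem ofReal_phaseMean_mul (hP : Continuous P) (q : ℝ≥0∞) :
    ENNReal.ofReal (phaseMean q P) * ENNReal.ofReal (2 * π) ^ (1 / q.toReal) =
      eLpNorm P q periodMeasure * eLpNorm Real.cos q periodMeasure := by
  rw [ENNReal.ofReal_rpow_of_pos Real.two_pi_pos, ← ENNReal.ofReal_mul (phaseMean_nonneg q P),
    phaseMean, div_mul_cancel₀ _ (by positivity), ENNReal.ofReal_mul lpNorm_nonneg,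
    ofReal_lpNorm (memLp_periodMeasure_of_continuous hP q),
    cosNorm_eq_toReal_eLpNorm_periodMeasure, ENNReal.ofReal_toReal
      (memLp_periodMeasure_of_continuous Real.continuous_cos q).eLpNorm_ne_top]

theorem phaseMean_le_of_forall_lpNorm_modulate_le (hP : Continuous P) (hq₀ : q ≠ 0)
    {U : ℝ} (hU : ∀ θ, lpNorm (modulate n θ P) q periodMeasure ≤ U) : phaseMean q P ≤ U := by
  have average := eLpNorm_mul_eLpNorm_cos_le (U := ENNReal.ofReal U) (μ := periodMeasure)
    hP.norm.measurable (c := fun t => n * t - 0 + Complex.arg (P t))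
    (by have := hP.measurable; fun_prop) hq₀ fun s => by
      simp only [← modulate_sub_eq_norm_mul_cos]
      rw [← ofReal_lpNorm (memLp_periodMeasure_of_continuous (continuous_modulate hP n _) q)]
      exact ENNReal.ofReal_le_ofReal (hU _)
  rw [eLpNorm_norm, ← ofReal_phaseMean_mul hP,
    ENNReal.mul_le_mul_iff_left (by positivity) (by finiteness)] at average
  exact (ENNReal.ofReal_le_ofReal_iff (lpNorm_nonneg.trans (hU 0))).1 average

theorem le_phaseMean_of_forall_le_lpNorm_modulate (hP : Continuous P) (hq₀ : q ≠ 0)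
    {L : ℝ} (hL : ∀ θ, L ≤ lpNorm (modulate n θ P) q periodMeasure) : L ≤ phaseMean q P := by
  have average := le_eLpNorm_mul_eLpNorm_cos (L := ENNReal.ofReal L) (μ := periodMeasure)
    hP.norm.measurable (c := fun t => n * t - 0 + Complex.arg (P t))
    (by have := hP.measurable; fun_prop) hq₀ fun s => by
      simp only [← modulate_sub_eq_norm_mul_cos]
      rw [← ofReal_lpNorm (memLp_periodMeasure_of_continuous (continuous_modulate hP n _) q)]
      exact ENNReal.ofReal_le_ofReal (hL _)
  rw [eLpNorm_norm, ← ofReal_phaseMean_mul hP,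
    ENNReal.mul_le_mul_iff_left (by positivity) (by finiteness)] at average
  exact (ENNReal.ofReal_le_ofReal_iff (phaseMean_nonneg q P)).1 average

theorem lpNorm_modulate_le (hP : Continuous P) (n : ℕ) (θ : ℝ) (q : ℝ≥0∞) :
    lpNorm (modulate n θ P) q periodMeasure ≤ lpNorm P q periodMeasure := by
  rw [← lpNorm_norm hP.aestronglyMeasurable]
  exact lpNorm_mono_real (memLp_periodMeasure_of_continuous hP q).norm (abs_modulate_le n θ P)

theorem phaseMean_le_lpNorm (hP : Continuous P) (hq₀ : q ≠ 0) :
    phaseMean q P ≤ lpNorm P q periodMeasure :=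
  phaseMean_le_of_forall_lpNorm_modulate_le (n := 0) hP hq₀ fun θ => lpNorm_modulate_le hP 0 θ q

theorem abs_lpNorm_modulate_sub_phaseMean_le (hM : 0 < M) (hP : Differentiable ℝ P)
    (hPM : ∀ t, ‖deriv P t‖ ≤ M * ‖P t‖) (hPT : Function.Periodic P (2 * π)) (hn : n ≠ 0)
    (hq : 1 ≤ q) (θ : ℝ) :
    |lpNorm (modulate n θ P) q periodMeasure - phaseMean q P| ≤
      (Real.exp (M * (2 * π / n)) - 1) * lpNorm P q periodMeasure := by
  have hq₀ : q ≠ 0 := (zero_lt_one.trans_le hq).ne'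
  have le_add := lpNorm_modulate_le_add hM hP hPM hPT hn hq
  rw [abs_sub_le_iff, sub_le_iff_le_add', sub_le_iff_le_add', ← sub_le_iff_le_add]
  exact ⟨le_phaseMean_of_forall_le_lpNorm_modulate hP.continuous hq₀
      fun θ' => sub_le_iff_le_add.2 (le_add θ' θ),
    phaseMean_le_of_forall_lpNorm_modulate_le hP.continuous hq₀ (le_add θ)⟩

end PhaseMean

section LpDuality

variable {X : Type*} [MeasurableSpace X] {μ : Measure X} {p q : ℝ≥0∞} {g : X → ℝ}

theorem abs_div_abs_le_one (y : ℝ) : abs (y / |y|) ≤ 1 := by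
  rw [abs_div, abs_abs]
  exact div_self_le_one _

theorem mul_div_abs_self (y : ℝ) : y * (y / |y|) = |y| := by
  rw [← mul_div_assoc, ← abs_mul_abs_self, mul_self_div_self]

theorem measure_setOf_lt_abs_pos_of_lt_lpNorm_top (hg : AEStronglyMeasurable g μ) {c : ℝ}
    (hc₀ : 0 ≤ c) (hc : c < lpNorm g ∞ μ) : 0 < μ {x | c < |g x|} := by
  rw [pos_iff_ne_zero]
  intro null
  have ae_le : ∀ᵐ x ∂μ, ‖g x‖ ≤ c := by
    rw [ae_iff]
    simpa using null
  refine hc.not_ge ?_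
  rw [← toReal_eLpNorm hg, eLpNorm_exponent_top]
  exact ENNReal.toReal_le_of_le_ofReal hc₀ (eLpNormEssSup_le_of_ae_bound ae_le)

theorem exists_le_integral_mul_of_lt_lpNorm_top [IsFiniteMeasure μ] (hg : MemLp g ∞ μ) {c : ℝ}
    (hc₀ : 0 ≤ c) (hc : c < lpNorm g ∞ μ) :
    ∃ Ψ : ℝ → ℝ, Measurable Ψ ∧ eLpNorm (Ψ ∘ g) 1 μ ≤ 1 ∧ c ≤ ∫ x, g x * Ψ (g x) ∂μ := by
  set S : Set X := {x | c < |g x|}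
  have hS : NullMeasurableSet S μ := nullMeasurableSet_lt aemeasurable_const hg.1.aemeasurable.abs
  have μS_ne_zero : μ S ≠ 0 := (measure_setOf_lt_abs_pos_of_lt_lpNorm_top hg.1 hc₀ hc).ne'
  set m := μ.real S
  have m_pos : 0 < m := ENNReal.toReal_pos μS_ne_zero (measure_ne_top _ _)
  refine ⟨{y | c < |y|}.indicator fun y => y / |y| / m, ?_, ?_, ?_⟩
  · exact (by fun_prop : Measurable fun y : ℝ => y / |y| / m).indicator
      (measurableSet_lt measurable_const measurable_abs)
  · calc eLpNorm (S.indicator fun x => g x / |g x| / m) 1 μ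
        ≤ eLpNorm (S.indicator fun _ => m⁻¹) 1 μ := by
          refine eLpNorm_mono fun x => ?_
          rw [norm_indicator_eq_indicator_norm, norm_indicator_eq_indicator_norm]
          refine Set.indicator_le_indicator' fun _ => ?_
          rw [norm_div, norm_inv, Real.norm_eq_abs, div_eq_mul_inv]
          exact mul_le_of_le_one_left (by positivity) (abs_div_abs_le_one (g x))
      _ = (μ S)⁻¹ * μ S := by
          rw [eLpNorm_indicator_const₀ hS one_ne_zero ENNReal.one_ne_top, enorm_inv m_pos.ne',
            Real.enorm_of_nonneg m_pos.le, ofReal_measureReal, ENNReal.toReal_one, div_one,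
            ENNReal.rpow_one]
      _ ≤ 1 := ENNReal.inv_mul_le_one _
  · calc c = ∫ x, S.indicator (fun _ => c / m) x ∂μ := by
          rw [integral_indicator₀ hS, setIntegral_const, smul_eq_mul, mul_div_cancel₀ _ m_pos.ne']
      _ ≤ ∫ x, S.indicator (fun x => |g x| / m) x ∂μ := by
          refine integral_mono ((integrable_const _).indicator₀ hS)
            (((hg.integrable le_top).abs.div_const _).indicator₀ hS) fun x => ?_
          exact Set.indicator_le_indicator' fun hx => by gcongr; exact hx.le
      _ = ∫ x, g x * S.indicator (fun x => g x / |g x| / m) x ∂μ := by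
          simp only [← Set.indicator_mul_right, ← mul_div_assoc (g _) _ m, mul_div_abs_self]

/-- The extremal function `y ↦ sign y · (|y| / A) ^ (q - 1)` of Hölder's inequality; composed with
`g` it has unit norm in the dual space and pairs with `g` to the `L^q` norm of `g`, provided `A` is
that norm. The sign is encoded as `y / |y|`, which is `0` at `y = 0`. -/
noncomputable def holderExtremal (q A y : ℝ) : ℝ := y / |y| * (|y| / A) ^ (q - 1)

theorem measurable_holderExtremal (q A : ℝ) : Measurable (holderExtremal q A) := by
  unfold holderExtremal
  fun_prop

theorem abs_holderExtremal_le (q : ℝ) {A : ℝ} (hA : 0 ≤ A) (y : ℝ) :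
    |holderExtremal q A y| ≤ ‖y / A‖ ^ (q - 1) := by
  rw [holderExtremal, abs_mul, abs_of_nonneg (by positivity : 0 ≤ (|y| / A) ^ (q - 1)), norm_div,
    Real.norm_of_nonneg hA, Real.norm_eq_abs]
  exact mul_le_of_le_one_left (by positivity) (abs_div_abs_le_one y)

theorem mul_holderExtremal {q A : ℝ} (hq : q ≠ 0) (hA : 0 ≤ A) (y : ℝ) :
    y * holderExtremal q A y = |y| ^ q / A ^ (q - 1) := by
  rw [holderExtremal, ← mul_assoc, mul_div_abs_self, Real.div_rpow (abs_nonneg y) hA,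
    ← mul_div_assoc]
  rcases (abs_nonneg y).eq_or_lt with hy | hy
  · rw [← hy, zero_mul, Real.zero_rpow hq]
  · rw [Real.rpow_sub_one hy.ne', mul_div_cancel₀ _ hy.ne']

theorem integral_mul_holderExtremal_eq_lpNorm (hq₀ : q ≠ 0) (hq : q ≠ ∞)
    (hg : AEStronglyMeasurable g μ) (hg₀ : 0 < lpNorm g q μ) :
    ∫ x, g x * holderExtremal q.toReal (lpNorm g q μ) (g x) ∂μ = lpNorm g q μ := by
  have hq_pos : 0 < q.toReal := ENNReal.toReal_pos hq₀ hq
  have integral_rpow_eq : ∫ x, |g x| ^ q.toReal ∂μ = lpNorm g q μ ^ q.toReal := by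
    simp only [lpNorm_eq_integral_norm_rpow_toReal hq₀ hq hg, Real.norm_eq_abs]
    rw [Real.rpow_inv_rpow (integral_nonneg fun x => by positivity) hq_pos.ne']
  simp only [mul_holderExtremal hq_pos.ne' hg₀.le]
  rw [integral_div, integral_rpow_eq, ← Real.rpow_sub hg₀, sub_sub_cancel, Real.rpow_one]

theorem eLpNorm_holderExtremal_comp_le_one [p.HolderConjugate q] (hq : q ≠ ∞)
    (hg : MemLp g q μ) (hg₀ : 0 < lpNorm g q μ) :
    eLpNorm (holderExtremal q.toReal (lpNorm g q μ) ∘ g) p μ ≤ 1 := by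
  set A := lpNorm g q μ
  have eLpNorm_le : eLpNorm (holderExtremal q.toReal A ∘ g) p μ ≤
      eLpNorm (fun x => ‖g x / A‖ ^ (q.toReal - 1)) p μ :=
    eLpNorm_mono_real fun x => abs_holderExtremal_le _ hg₀.le (g x)
  refine eLpNorm_le.trans ?_
  by_cases hp : p = ∞
  · obtain rfl : q = 1 := (ENNReal.HolderConjugate.eq_top_iff_eq_one p q).1 hp
    rw [hp, eLpNorm_exponent_top, ← ENNReal.ofReal_one]
    exact eLpNormEssSup_le_of_ae_bound (.of_forall fun x => by simp)
  have hpq := ENNReal.HolderConjugate.toReal_of_ne_top hp hq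
  have exponent_eq : p * ENNReal.ofReal (q.toReal - 1) = q := by
    rw [← ENNReal.ofReal_toReal hp, ← ENNReal.ofReal_mul hpq.nonneg, mul_comm,
      hpq.symm.sub_one_mul_conj, ENNReal.ofReal_toReal hq]
  have eLpNorm_div_eq_one : eLpNorm (fun x => g x / A) q μ = 1 := by
    rw [show (fun x => g x / A) = A⁻¹ • g by ext x; simp [div_eq_inv_mul], eLpNorm_const_smul,
      enorm_inv hg₀.ne', Real.enorm_of_nonneg hg₀.le, ofReal_lpNorm hg]
    exact ENNReal.inv_mul_cancel (ofReal_lpNorm hg ▸ (ENNReal.ofReal_pos.2 hg₀).ne') hg.2.ne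
  rw [eLpNorm_norm_rpow _ (sub_pos.2 hpq.symm.lt), exponent_eq, eLpNorm_div_eq_one,
    ENNReal.one_rpow]

theorem exists_le_integral_mul_of_lt_lpNorm [IsFiniteMeasure μ] [p.HolderConjugate q]
    (hg : MemLp g q μ) {c : ℝ} (hc : c < lpNorm g q μ) :
    ∃ Ψ : ℝ → ℝ, Measurable Ψ ∧ eLpNorm (Ψ ∘ g) p μ ≤ 1 ∧ c ≤ ∫ x, g x * Ψ (g x) ∂μ := by
  rcases lt_or_ge c 0 with hc₀ | hc₀
  · exact ⟨0, measurable_zero, by simp [Function.comp_def], by simpa using hc₀.le⟩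
  by_cases hq : q = ∞
  · subst hq
    obtain rfl : p = 1 := by exact ENNReal.HolderConjugate.unique ∞ p 1
    exact exists_le_integral_mul_of_lt_lpNorm_top hg hc₀ hc
  · have hg₀ := hc₀.trans_lt hc
    refine ⟨holderExtremal q.toReal (lpNorm g q μ), measurable_holderExtremal _ _,
      eLpNorm_holderExtremal_comp_le_one hq hg hg₀, ?_⟩
    rw [integral_mul_holderExtremal_eq_lpNorm (ENNReal.HolderConjugate.ne_zero q p) hq hg.1 hg₀]
    exact hc.le

end LpDuality

section MeanZeroDuality

variable {p q : ℝ≥0∞} {g ψ : ℝ → ℝ}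

theorem integral_comp_add_right_periodMeasure (hg : Function.Periodic g (2 * π)) (c : ℝ) :
    ∫ t, g (t + c) ∂periodMeasure = ∫ t, g t ∂periodMeasure := by
  have hπ : -π ≤ π := by linarith [Real.pi_pos]
  rw [← intervalIntegral.integral_of_le hπ, ← intervalIntegral.integral_of_le hπ,
    intervalIntegral.integral_comp_add_right]
  convert hg.intervalIntegral_add_eq (-π + c) (-π) using 2 <;> ring

theorem integral_mul_comp_add_right_periodMeasure (hg : Function.Periodic g (2 * π))
    (hψ : Function.Periodic ψ (2 * π)) (c : ℝ) :
    ∫ t, g t * ψ (t + c) ∂periodMeasure = ∫ t, g (t - c) * ψ t ∂periodMeasure := by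
  have := integral_comp_add_right_periodMeasure ((hg.sub_const c).mul hψ) c
  simpa using this

/-- Half the difference of `ψ` and its translate by `h`: a mean-zero function of no larger norm. -/
noncomputable def halfTranslateSub (h : ℝ) (ψ : ℝ → ℝ) (t : ℝ) : ℝ := (ψ t - ψ (t + h)) / 2

theorem periodic_halfTranslateSub {T : ℝ} (hψ : Function.Periodic ψ T) (h : ℝ) :
    Function.Periodic (halfTranslateSub h ψ) T := fun t => by
  rw [halfTranslateSub, halfTranslateSub, hψ t, add_right_comm, hψ]

theorem measurable_halfTranslateSub (hψ : Measurable ψ) (h : ℝ) :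
    Measurable (halfTranslateSub h ψ) :=
  (hψ.sub (hψ.comp (measurable_add_const h))).div_const 2

theorem memLp_comp_add_right_periodMeasure (hψT : Function.Periodic ψ (2 * π))
    (hψ : Measurable ψ) (hψ_mem : MemLp ψ p periodMeasure) (h : ℝ) :
    MemLp (fun t => ψ (t + h)) p periodMeasure := by
  refine ⟨(hψ.comp (measurable_add_const h)).aestronglyMeasurable, ?_⟩
  rw [eLpNorm_comp_add_right_periodMeasure hψT hψ_mem.1]
  exact hψ_mem.2

theorem eLpNorm_halfTranslateSub_le (hp : 1 ≤ p) (hψT : Function.Periodic ψ (2 * π))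
    (hψ : Measurable ψ) (h : ℝ) :
    eLpNorm (halfTranslateSub h ψ) p periodMeasure ≤ eLpNorm ψ p periodMeasure := by
  have hψ_shift : Measurable fun t => ψ (t + h) := hψ.comp (measurable_add_const h)
  calc eLpNorm (halfTranslateSub h ψ) p periodMeasure
      = ‖(2⁻¹ : ℝ)‖ₑ * eLpNorm (ψ - fun t => ψ (t + h)) p periodMeasure := by
        rw [← eLpNorm_const_smul]
        congr 1 with t
        simp only [halfTranslateSub, Pi.smul_apply, Pi.sub_apply, smul_eq_mul]
        ring
    _ ≤ ‖(2⁻¹ : ℝ)‖ₑ * (eLpNorm ψ p periodMeasure + eLpNorm ψ p periodMeasure) := by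
        gcongr
        refine (eLpNorm_sub_le hψ.aestronglyMeasurable hψ_shift.aestronglyMeasurable hp).trans_eq ?_
        rw [eLpNorm_comp_add_right_periodMeasure hψT hψ.aestronglyMeasurable]
    _ = eLpNorm ψ p periodMeasure := by
        rw [enorm_inv two_ne_zero, Real.enorm_of_nonneg zero_le_two, ENNReal.ofReal_ofNat,
          ← two_mul, ← mul_assoc, ENNReal.inv_mul_cancel two_ne_zero ENNReal.ofNat_ne_top, one_mul]

theorem integral_halfTranslateSub (hψT : Function.Periodic ψ (2 * π)) (hψ : Measurable ψ)
    (hψ_int : Integrable ψ periodMeasure) (h : ℝ) :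
    ∫ t, halfTranslateSub h ψ t ∂periodMeasure = 0 := by
  have hψ_shift := memLp_one_iff_integrable.1 <|
    memLp_comp_add_right_periodMeasure hψT hψ (memLp_one_iff_integrable.2 hψ_int) h
  simp only [halfTranslateSub]
  rw [integral_div, integral_sub hψ_int hψ_shift, integral_comp_add_right_periodMeasure hψT,
    sub_self, zero_div]

theorem integral_mul_halfTranslateSub (hgT : Function.Periodic g (2 * π)) (hg : Continuous g)
    (hψT : Function.Periodic ψ (2 * π)) (hψ : Measurable ψ) (hψ_int : Integrable ψ periodMeasure)
    (h : ℝ) :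
    ∫ t, g t * halfTranslateSub h ψ t ∂periodMeasure =
      ∫ t, g t * ψ t ∂periodMeasure -
        (∫ t, (g t + g (t - h)) * ψ t ∂periodMeasure) / 2 := by
  have integrable_mul {u v : ℝ → ℝ} (hu : Continuous u) (hv : Integrable v periodMeasure) :
      Integrable (fun t => u t * v t) periodMeasure :=
    hv.mul_of_top_right (memLp_periodMeasure_of_continuous hu ∞)
  have hψ_shift := memLp_one_iff_integrable.1 <|
    memLp_comp_add_right_periodMeasure hψT hψ (memLp_one_iff_integrable.2 hψ_int) h
  have hg_shift : Continuous fun t => g (t - h) := by fun_prop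
  simp only [halfTranslateSub, mul_div_assoc', mul_sub, add_mul]
  rw [integral_div, integral_sub (integrable_mul hg hψ_int) (integrable_mul hg hψ_shift),
    integral_add (integrable_mul hg hψ_int) (integrable_mul hg_shift hψ_int),
    integral_mul_comp_add_right_periodMeasure hgT hψT]
  ring

/-- When `g` is nearly antiperiodic with antiperiod `h`, little is lost by restricting the dual
pairing to mean-zero functions. -/
theorem exists_mean_zero_le_integral_mul [p.HolderConjugate q] (hg : Continuous g)
    (hgT : Function.Periodic g (2 * π)) (h : ℝ) {c : ℝ} (hc : c < lpNorm g q periodMeasure) :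
    ∃ φ : ℝ → ℝ, Measurable φ ∧ Function.Periodic φ (2 * π) ∧ eLpNorm φ p periodMeasure ≤ 1 ∧
      ∫ t, φ t ∂periodMeasure = 0 ∧
      c - lpNorm (fun t => g t + g (t - h)) q periodMeasure / 2 ≤
        ∫ t, g t * φ t ∂periodMeasure := by
  have hp : 1 ≤ p := ENNReal.HolderConjugate.one_le p q
  obtain ⟨Ψ, hΨ, hΨ_le, c_le⟩ :=
    exists_le_integral_mul_of_lt_lpNorm (p := p) (memLp_periodMeasure_of_continuous hg q) hc
  have hψT : Function.Periodic (Ψ ∘ g) (2 * π) := hgT.comp Ψ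
  have hψ : Measurable (Ψ ∘ g) := hΨ.comp hg.measurable
  have hψ_int : Integrable (Ψ ∘ g) periodMeasure :=
    MemLp.integrable hp ⟨hψ.aestronglyMeasurable, hΨ_le.trans_lt ENNReal.one_lt_top⟩
  refine ⟨halfTranslateSub h (Ψ ∘ g), measurable_halfTranslateSub hψ h,
    periodic_halfTranslateSub hψT h, (eLpNorm_halfTranslateSub_le hp hψT hψ h).trans hΨ_le,
    integral_halfTranslateSub hψT hψ hψ_int h, ?_⟩
  have sum_le := abs_integral_mul_le_lpNorm (p := p)
    (memLp_periodMeasure_of_continuous (by fun_prop : Continuous fun t => g t + g (t - h)) q)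
    hψ.aestronglyMeasurable hΨ_le
  rw [integral_mul_halfTranslateSub hgT hg hψT hψ hψ_int]
  simp only [Function.comp_apply] at sum_le ⊢
  linarith [le_of_abs_le sum_le]

end MeanZeroDuality

section NearAntiperiodicity

variable {P : ℝ → ℂ} {M : ℝ} {n : ℕ} {p q : ℝ≥0∞}

theorem lpNorm_modulate_add_modulate_le (hM : 0 < M) (hP : Differentiable ℝ P)
    (hPM : ∀ t, ‖deriv P t‖ ≤ M * ‖P t‖) (hPT : Function.Periodic P (2 * π)) (hn : n ≠ 0)
    (hq : 1 ≤ q) (θ : ℝ) :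
    lpNorm (fun t => modulate n θ P (0 - t) + modulate n θ P (0 - (t - π / n))) q periodMeasure ≤
      (Real.exp (M * (π / n)) - 1) * lpNorm P q periodMeasure := by
  have hP_neg : Continuous fun t => P (0 - t) := by have := hP.continuous; fun_prop
  have exp_nonneg : 0 ≤ Real.exp (M * (π / n)) - 1 :=
    sub_nonneg.2 (Real.one_le_exp (by positivity))
  rw [← lpNorm_comp_sub_left_periodMeasure hPT hP.continuous.aestronglyMeasurable 0]
  refine (lpNorm_le_add_mul_lpNorm (g := (0 : ℝ → ℝ)) hq MemLp.zero
    (memLp_periodMeasure_of_continuous hP_neg q) exp_nonneg fun t => ?_).trans_eq (by simp)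
  have shift_le := abs_modulate_add_div_sub_modulate_le_of_norm_deriv_le hM hP hPM hn θ (0 - t)
    Real.pi_pos.le le_rfl
  rw [modulate_sub_pi, sub_neg_eq_add, add_comm] at shift_le
  simpa [sub_sub_eq_add_sub, sub_eq_neg_add, add_comm] using shift_le

theorem exists_mean_zero_le_integral_modulate_mul [p.HolderConjugate q] (hM : 0 < M)
    (hP : Differentiable ℝ P) (hPM : ∀ t, ‖deriv P t‖ ≤ M * ‖P t‖)
    (hPT : Function.Periodic P (2 * π)) (hn : n ≠ 0) (θ : ℝ) {c : ℝ}
    (hc : c < lpNorm (modulate n θ P) q periodMeasure) :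
    ∃ φ : ℝ → ℝ, Measurable φ ∧ Function.Periodic φ (2 * π) ∧ eLpNorm φ p periodMeasure ≤ 1 ∧
      ∫ t, φ t ∂periodMeasure = 0 ∧
      c - (Real.exp (M * (π / n)) - 1) * lpNorm P q periodMeasure / 2 ≤
        ∫ t, modulate n θ P (0 - t) * φ t ∂periodMeasure := by
  have hF : Continuous (modulate n θ P) := continuous_modulate hP.continuous n θ
  have hFT : Function.Periodic (modulate n θ P) (2 * π) := periodic_modulate hPT n θ
  rw [← lpNorm_comp_sub_left_periodMeasure hFT hF.aestronglyMeasurable 0] at hc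
  obtain ⟨φ, hφ, hφT, hφ_le, integral_eq_zero, c_le⟩ := exists_mean_zero_le_integral_mul (p := p)
    (by fun_prop : Continuous fun t => modulate n θ P (0 - t)) (hFT.const_sub 0) (π / n) hc
  refine ⟨φ, hφ, hφT, hφ_le, integral_eq_zero, le_trans ?_ c_le⟩
  gcongr
  exact lpNorm_modulate_add_modulate_le hM hP hPM hPT hn (ENNReal.HolderConjugate.one_le q p) θ

end NearAntiperiodicity

section PoissonSeries

variable {α r : ℝ}

/-- The coefficients `e^{-αk^r}` of the generalized Poisson kernel, starting at `k = 0`. -/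
noncomputable def poissonCoeff (α r : ℝ) (k : ℕ) : ℝ := Real.exp (-α * (k : ℝ) ^ r)

theorem poissonCoeff_pos (α r : ℝ) (k : ℕ) : 0 < poissonCoeff α r k := Real.exp_pos _

theorem Pn_eq_expSeries (α r : ℝ) (n : ℕ) :
    Pn α r n = expSeries fun k => poissonCoeff α r (k + n) := rfl

theorem isLittleO_poissonCoeff (hα : 0 < α) (hr : 0 < r) (s : ℝ) :
    poissonCoeff α r =o[atTop] fun k : ℕ => (k : ℝ) ^ s := by
  have tendsto_rpow : Tendsto (fun k : ℕ => (k : ℝ) ^ r) atTop atTop :=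
    (tendsto_rpow_atTop hr).comp tendsto_natCast_atTop_atTop
  refine ((isLittleO_exp_neg_mul_rpow_atTop hα (s / r)).comp_tendsto tendsto_rpow).congr_right
    fun k => ?_
  rw [Function.comp_apply, ← Real.rpow_mul k.cast_nonneg, mul_div_cancel₀ _ hr.ne']

theorem summable_natCast_mul_poissonCoeff (hα : 0 < α) (hr : 0 < r) :
    Summable fun k : ℕ => k * poissonCoeff α r k := by
  refine summable_of_isBigO_nat (Real.summable_nat_rpow.2 (by norm_num : (-2 : ℝ) < -1)) ?_
  refine ((Asymptotics.isBigO_refl (fun k : ℕ => (k : ℝ)) atTop).mul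
    (isLittleO_poissonCoeff hα hr (-3)).isBigO).congr_right fun k => ?_
  rw [← Real.rpow_one_add' k.cast_nonneg (by norm_num)]
  norm_num

theorem summable_poissonCoeff_add (hα : 0 < α) (hr : 0 < r) (n : ℕ) :
    Summable fun k => poissonCoeff α r (k + n) :=
  (summable_nat_add_iff n).2 <|
    summable_of_isBigO_nat (Real.summable_nat_rpow.2 (by norm_num : (-2 : ℝ) < -1))
      (isLittleO_poissonCoeff hα hr (-2)).isBigO

theorem summable_natCast_mul_poissonCoeff_add (hα : 0 < α) (hr : 0 < r) (n : ℕ) :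
    Summable fun k : ℕ => k * poissonCoeff α r (k + n) := by
  refine .of_nonneg_of_le (fun k => mul_nonneg k.cast_nonneg (poissonCoeff_pos α r _).le)
    (fun k => ?_) ((summable_nat_add_iff n).2 (summable_natCast_mul_poissonCoeff hα hr))
  gcongr
  · exact (poissonCoeff_pos α r _).le
  · exact k.le_add_right n

theorem strictAnti_poissonCoeff_add (hα : 0 < α) (hr : 0 < r) (n : ℕ) :
    StrictAnti fun k => poissonCoeff α r (k + n) := by
  intro j k hjk
  have : ((j + n : ℕ) : ℝ) ^ r < ((k + n : ℕ) : ℝ) ^ r := by gcongr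
  simp only [poissonCoeff, Real.exp_lt_exp]
  nlinarith

theorem periodic_Pn (α r : ℝ) (n : ℕ) : Function.Periodic (Pn α r n) (2 * π) :=
  periodic_expSeries _

theorem differentiable_Pn (hα : 0 < α) (hr : 0 < r) (n : ℕ) : Differentiable ℝ (Pn α r n) :=
  differentiable_expSeries (summable_poissonCoeff_add hα hr n)
    (summable_natCast_mul_poissonCoeff_add hα hr n)

theorem Pn_ne_zero (hα : 0 < α) (hr : 0 < r) (n : ℕ) (t : ℝ) : Pn α r n t ≠ 0 :=
  expSeries_ne_zero (summable_poissonCoeff_add hα hr n) (strictAnti_poissonCoeff_add hα hr n) t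

theorem norm_deriv_Pn_le (hα : 0 < α) (hr : 0 < r) (n : ℕ) (t : ℝ) :
    ‖deriv (Pn α r n) t‖ ≤ Mn α r n * ‖Pn α r n t‖ := by
  rw [← div_le_iff₀ (norm_pos_iff.2 (Pn_ne_zero hα hr n t))]
  exact le_ciSup (bddAbove_range_norm_deriv_div_norm (periodic_Pn α r n) Real.two_pi_pos.ne'
    (differentiable_Pn hα hr n) (continuous_deriv_expSeries (summable_poissonCoeff_add hα hr n)
      (summable_natCast_mul_poissonCoeff_add hα hr n)) (Pn_ne_zero hα hr n)) t

theorem Mn_pos (hα : 0 < α) (hr : 0 < r) (n : ℕ) : 0 < Mn α r n := by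
  obtain ⟨t, ht⟩ := exists_deriv_expSeries_ne_zero (summable_poissonCoeff_add hα hr n)
    (summable_natCast_mul_poissonCoeff_add hα hr n) (fun k => (poissonCoeff_pos α r _).le)
    (poissonCoeff_pos α r _).ne'
  exact pos_of_mul_pos_left ((norm_pos_iff.2 ht).trans_le (norm_deriv_Pn_le hα hr n t))
    (norm_nonneg _)

theorem lpNorm_pos_of_forall_ne_zero {X E : Type*} [MeasurableSpace X] [NormedAddCommGroup E]
    {μ : Measure X} [NeZero μ] {f : X → E} {q : ℝ≥0∞} (hf : MemLp f q μ) (hq : q ≠ 0)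
    (hf₀ : ∀ x, f x ≠ 0) : 0 < lpNorm f q μ := by
  refine lpNorm_nonneg.lt_of_ne fun h => ?_
  obtain ⟨x, hx⟩ := ((lpNorm_eq_zero hf hq).1 h.symm).exists
  exact hf₀ x hx

theorem lpNorm_Pn_pos (hα : 0 < α) (hr : 0 < r) (n : ℕ) {q : ℝ≥0∞} (hq : q ≠ 0) :
    0 < lpNorm (Pn α r n) q periodMeasure := by
  have : NeZero periodMeasure := ⟨by simpa [periodMeasure] using Real.pi_pos⟩
  exact lpNorm_pos_of_forall_ne_zero
    (memLp_periodMeasure_of_continuous (differentiable_Pn hα hr n).continuous q) hq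
    (Pn_ne_zero hα hr n)

theorem genPoissonKernel_eq_modulate (hα : 0 < α) (hr : 0 < r) (β : ℝ) :
    genPoissonKernel α r β = modulate 1 (β * π / 2) (Pn α r 1) := by
  funext t
  rw [Pn_eq_expSeries,
    ← (hasSum_modulate_expSeries (summable_poissonCoeff_add hα hr 1) 1 (β * π / 2) t).tsum_eq]
  simp [genPoissonKernel, poissonCoeff]

end PoissonSeries

section Convolution

variable {K c φ : ℝ → ℝ}

theorem intervalIntegral_neg_pi_pi (f : ℝ → ℝ) :
    ∫ t in (-π)..π, f t = ∫ t, f t ∂periodMeasure :=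
  intervalIntegral.integral_of_le (by linarith [Real.pi_pos])

theorem integrable_periodMeasure_of_continuous (hK : Continuous K) : Integrable K periodMeasure :=
  memLp_one_iff_integrable.1 (memLp_periodMeasure_of_continuous hK 1)

theorem exists_abs_le_of_periodic (hK : Continuous K) (hKT : Function.Periodic K (2 * π)) :
    ∃ C, ∀ t, |K t| ≤ C := by
  obtain ⟨C, hC⟩ := (hKT.isBounded_of_continuous Real.two_pi_pos.ne' hK).exists_norm_le
  exact ⟨C, fun t => hC _ (Set.mem_range_self t)⟩

theorem integrable_comp_sub_left_mul (hK : Continuous K) (hKT : Function.Periodic K (2 * π))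
    (hφ : Integrable φ periodMeasure) (x : ℝ) :
    Integrable (fun t => K (x - t) * φ t) periodMeasure := by
  obtain ⟨C, hC⟩ := exists_abs_le_of_periodic hK hKT
  exact hφ.bdd_mul (by fun_prop : Continuous fun t => K (x - t)).aestronglyMeasurable
    (.of_forall fun t => hC (x - t))

theorem continuous_integral_comp_sub_left_mul (hK : Continuous K)
    (hKT : Function.Periodic K (2 * π)) (hφ : Integrable φ periodMeasure) :
    Continuous fun x => ∫ t, K (x - t) * φ t ∂periodMeasure := by
  obtain ⟨C, hC⟩ := exists_abs_le_of_periodic hK hKT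
  refine continuous_of_dominated (bound := fun t => C * |φ t|)
    (fun x => (integrable_comp_sub_left_mul hK hKT hφ x).aestronglyMeasurable)
    (fun x => .of_forall fun t => ?_) (hφ.abs.const_mul C) (.of_forall fun t => by fun_prop)
  rw [norm_mul, Real.norm_eq_abs, Real.norm_eq_abs]
  gcongr
  exact hC (x - t)

theorem integral_integral_comp_sub_left_mul (hK : Continuous K)
    (hKT : Function.Periodic K (2 * π)) (hc : Continuous c) (hcT : Function.Periodic c (2 * π))
    (hφ : Integrable φ periodMeasure) (x : ℝ) :
    ∫ u, (∫ t, K (u - t) * φ t ∂periodMeasure) * c (x - u) ∂periodMeasure =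
      ∫ t, (∫ v, K v * c (x - t - v) ∂periodMeasure) * φ t ∂periodMeasure := by
  obtain ⟨A, hA⟩ := exists_abs_le_of_periodic hK hKT
  obtain ⟨B, hB⟩ := exists_abs_le_of_periodic hc hcT
  have integrable_prod : Integrable (fun z : ℝ × ℝ => K (z.1 - z.2) * c (x - z.1) * φ z.2)
      (periodMeasure.prod periodMeasure) := by
    refine (hφ.comp_snd periodMeasure).bdd_mul (c := A * B)
      (Continuous.aestronglyMeasurable (by fun_prop)) (.of_forall fun z => ?_)
    rw [norm_mul]
    exact mul_le_mul (hA _) (hB _) (norm_nonneg _) ((abs_nonneg _).trans (hA 0))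
  have shift (t : ℝ) : ∫ u, K (u - t) * c (x - u) ∂periodMeasure =
      ∫ v, K v * c (x - t - v) ∂periodMeasure := by
    have := integral_comp_add_right_periodMeasure (hKT.mul (hcT.const_sub (x - t))) (-t)
    simpa [← sub_eq_add_neg] using this
  calc ∫ u, (∫ t, K (u - t) * φ t ∂periodMeasure) * c (x - u) ∂periodMeasure
      = ∫ u, ∫ t, K (u - t) * c (x - u) * φ t ∂periodMeasure ∂periodMeasure := by
        simp_rw [← integral_mul_const, mul_right_comm]
    _ = ∫ t, ∫ u, K (u - t) * c (x - u) * φ t ∂periodMeasure ∂periodMeasure :=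
        integral_integral_swap integrable_prod
    _ = ∫ t, (∫ v, K v * c (x - t - v) ∂periodMeasure) * φ t ∂periodMeasure := by
        simp_rw [integral_mul_const, shift]

end Convolution

section CosineSeries

theorem integral_cos_intCast_mul_add (m : ℤ) (c : ℝ) :
    ∫ u, Real.cos (m * u + c) ∂periodMeasure = if m = 0 then 2 * π * Real.cos c else 0 := by
  rw [← intervalIntegral_neg_pi_pi]
  split_ifs with hm
  · simp only [hm, Int.cast_zero, zero_mul, zero_add, intervalIntegral.integral_const, smul_eq_mul]
    ring
  · rw [intervalIntegral.integral_comp_mul_add Real.cos (Int.cast_ne_zero.2 hm) c, integral_cos,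
      show (m : ℝ) * π + c = (m * (-π) + c) + m * (2 * π) by ring, Real.sin_add_int_mul_two_pi,
      sub_self, smul_zero]

theorem integral_cos_natCast_mul_sub (k : ℕ) (x : ℝ) :
    ∫ u, Real.cos (k * (x - u)) ∂periodMeasure = if k = 0 then 2 * π else 0 := by
  have integral_eq := integral_cos_intCast_mul_add (-k) (k * x)
  have phase_eq (u : ℝ) : ((-k : ℤ) : ℝ) * u + k * x = k * (x - u) := by
    push_cast
    ring
  simp_rw [phase_eq, neg_eq_zero, Nat.cast_eq_zero] at integral_eq
  rw [integral_eq]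
  split_ifs with hk <;> simp [hk]

theorem integral_cos_mul_cos_sub {j : ℕ} (hj : j ≠ 0) (k : ℕ) (θ x : ℝ) :
    ∫ u, Real.cos (j * u - θ) * Real.cos (k * (x - u)) ∂periodMeasure =
      if j = k then π * Real.cos (k * x - θ) else 0 := by
  have product_to_sum (u : ℝ) : Real.cos (j * u - θ) * Real.cos (k * (x - u)) =
      1 / 2 * (Real.cos (((j - k : ℤ) : ℝ) * u + (k * x - θ)) +
        Real.cos (((j + k : ℤ) : ℝ) * u + (-θ - k * x))) := by
    rw [show ((j - k : ℤ) : ℝ) * u + (k * x - θ) = (j * u - θ) + k * (x - u) by push_cast; ring,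
      show ((j + k : ℤ) : ℝ) * u + (-θ - k * x) = (j * u - θ) - k * (x - u) by push_cast; ring,
      Real.cos_add (j * u - θ), Real.cos_sub (j * u - θ) (k * (x - u))]
    ring
  simp_rw [product_to_sum]
  rw [integral_const_mul, integral_add (integrable_periodMeasure_of_continuous (by fun_prop))
      (integrable_periodMeasure_of_continuous (by fun_prop)), integral_cos_intCast_mul_add,
    integral_cos_intCast_mul_add, if_neg (by omega : ¬((j : ℤ) + k = 0)), add_zero]
  simp only [sub_eq_zero, Nat.cast_inj]
  split_ifs <;> ring

variable {a : ℕ → ℝ}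

/-- The tail `t ↦ Σ_{k≥n} a k cos(kt-θ)` of a cosine series with phase `θ`. -/
noncomputable def cosTail (a : ℕ → ℝ) (n : ℕ) (θ : ℝ) : ℝ → ℝ :=
  modulate n θ (expSeries fun k => a (k + n))

theorem hasSum_cosTail (ha : Summable a) (n : ℕ) (θ t : ℝ) :
    HasSum (fun k => a (k + n) * Real.cos (((k + n : ℕ) : ℝ) * t - θ)) (cosTail a n θ t) :=
  hasSum_modulate_expSeries ((summable_nat_add_iff n).2 ha) n θ t

theorem periodic_cosTail (a : ℕ → ℝ) (n : ℕ) (θ : ℝ) :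
    Function.Periodic (cosTail a n θ) (2 * π) :=
  periodic_modulate (periodic_expSeries _) n θ

theorem abs_mul_cos_le (c x : ℝ) : |c * Real.cos x| ≤ |c| := by
  rw [abs_mul]
  exact mul_le_of_le_one_right (abs_nonneg _) (Real.abs_cos_le_one _)

theorem continuous_cosTail (ha : Summable a) (n : ℕ) (θ : ℝ) : Continuous (cosTail a n θ) := by
  rw [funext fun t => (hasSum_cosTail ha n θ t).tsum_eq.symm]
  exact continuous_tsum (fun k => by fun_prop) ((summable_nat_add_iff n).2 ha).abs
    fun k t => abs_mul_cos_le (a (k + n)) _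

theorem sum_add_cosTail_succ (ha : Summable a) (m : ℕ) (θ t : ℝ) :
    ∑ k ∈ Finset.Icc 1 m, a k * Real.cos (k * t - θ) + cosTail a (m + 1) θ t =
      cosTail a 1 θ t := by
  have tail_eq : cosTail a (m + 1) θ t = cosTail a 1 θ t -
      ∑ k ∈ Finset.range m, a (k + 1) * Real.cos (((k + 1 : ℕ) : ℝ) * t - θ) := by
    refine (hasSum_cosTail ha (m + 1) θ t).unique ?_
    simpa only [add_assoc] using (hasSum_nat_add_iff' m).2 (hasSum_cosTail ha 1 θ t)
  rw [tail_eq, Finset.range_eq_Ico,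
    Finset.sum_Ico_add' (fun k : ℕ => a k * Real.cos (k * t - θ)) 0 m 1, zero_add,
    Finset.Ico_add_one_right_eq_Icc, add_sub_cancel]

theorem integral_cosTail_one_mul_cos (ha : Summable a) (θ x : ℝ) (k : ℕ) :
    ∫ u, cosTail a 1 θ u * Real.cos (k * (x - u)) ∂periodMeasure =
      if k = 0 then 0 else π * (a k * Real.cos (k * x - θ)) := by
  have ha_succ := (summable_nat_add_iff 1).2 ha
  have hasSum_integral := hasSum_integral_of_dominated_convergence (μ := periodMeasure)
    (F := fun j u => a (j + 1) * Real.cos (((j + 1 : ℕ) : ℝ) * u - θ) * Real.cos (k * (x - u)))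
    (bound := fun j _ => |a (j + 1)|)
    (fun j => Continuous.aestronglyMeasurable (by fun_prop))
    (fun j => .of_forall fun u => ?_) (.of_forall fun _ => ha_succ.abs) (integrable_const _)
    (.of_forall fun u => (hasSum_cosTail ha 1 θ u).mul_right _)
  · simp_rw [mul_assoc, integral_const_mul,
      integral_cos_mul_cos_sub (Nat.succ_ne_zero _)] at hasSum_integral
    rw [← hasSum_integral.tsum_eq]
    rcases k with _ | k
    · simp
    · rw [tsum_eq_single k fun j hj => by simp [hj], if_pos rfl, if_neg k.succ_ne_zero,
        mul_left_comm]
  · rw [norm_mul]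
    exact (mul_le_of_le_one_right (norm_nonneg _) (Real.abs_cos_le_one _)).trans
      (abs_mul_cos_le (a (j + 1)) _)

theorem exists_cosTail_one_ne_zero (ha : Summable a) (ha₁ : a 1 ≠ 0) (θ : ℝ) :
    ∃ t ∈ Set.Ioo 0 (2 * π), cosTail a 1 θ t ≠ 0 := by
  by_contra! tail_eq_zero
  have integral_eq := integral_cosTail_one_mul_cos ha θ θ 1
  have integrand_periodic : Function.Periodic
      (fun u => cosTail a 1 θ u * Real.cos ((1 : ℕ) * (θ - u))) (2 * π) :=
    (periodic_cosTail a 1 θ).mul (by simpa using Real.cos_periodic.const_sub θ)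
  have integral_shift := integrand_periodic.intervalIntegral_add_eq (-π) 0
  rw [show -π + 2 * π = π by ring, intervalIntegral_neg_pi_pi, integral_eq, zero_add,
    intervalIntegral.integral_of_le Real.two_pi_pos.le, integral_Ioc_eq_integral_Ioo,
    setIntegral_eq_zero_of_forall_eq_zero fun u hu => by rw [tail_eq_zero u hu, zero_mul]]
    at integral_shift
  simp [ha₁, Real.pi_ne_zero] at integral_shift

end CosineSeries

section FourierRemainder

variable {a : ℕ → ℝ} {f φ : ℝ → ℝ} {a₀ θ : ℝ}

theorem fourierCoefA_mul_cos_add_fourierCoefB_mul_sin (hf : Continuous f) (k : ℕ) (x : ℝ) :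
    fourierCoefA f k * Real.cos (k * x) + fourierCoefB f k * Real.sin (k * x) =
      1 / π * ∫ u, f u * Real.cos (k * (x - u)) ∂periodMeasure := by
  have cos_sub (u : ℝ) : f u * Real.cos (k * (x - u)) =
      f u * Real.cos (k * u) * Real.cos (k * x) + f u * Real.sin (k * u) * Real.sin (k * x) := by
    rw [mul_sub, Real.cos_sub]
    ring
  simp_rw [← intervalIntegral_neg_pi_pi, cos_sub]
  rw [intervalIntegral.integral_add (Continuous.intervalIntegrable (by fun_prop) _ _)
      (Continuous.intervalIntegrable (by fun_prop) _ _), intervalIntegral.integral_mul_const,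
    intervalIntegral.integral_mul_const, fourierCoefA, fourierCoefB]
  ring

theorem integral_convolution_mul_cos (ha : Summable a) (hφ : Integrable φ periodMeasure)
    (θ x : ℝ) (k : ℕ) :
    ∫ u, (∫ t, cosTail a 1 θ (u - t) * φ t ∂periodMeasure) * Real.cos (k * (x - u))
        ∂periodMeasure =
      if k = 0 then 0 else π * ∫ t, a k * Real.cos (k * (x - t) - θ) * φ t ∂periodMeasure := by
  have periodic_cos : Function.Periodic (fun u : ℝ => Real.cos (k * u)) (2 * π) := fun u => by
    simp only [mul_add, Real.cos_add_nat_mul_two_pi]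
  rw [integral_integral_comp_sub_left_mul (c := fun u => Real.cos (k * u))
    (continuous_cosTail ha 1 θ) (periodic_cosTail a 1 θ) (by fun_prop) periodic_cos hφ x]
  simp_rw [integral_cosTail_one_mul_cos ha]
  split_ifs
  · simp
  · simp_rw [mul_assoc, integral_const_mul]

theorem integral_mul_cos_of_eq_convolution (ha : Summable a) (hφ : Integrable φ periodMeasure)
    (hf : ∀ x, f x = a₀ / 2 + 1 / π * ∫ t, cosTail a 1 θ (x - t) * φ t ∂periodMeasure)
    (x : ℝ) (k : ℕ) :
    ∫ u, f u * Real.cos (k * (x - u)) ∂periodMeasure =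
      if k = 0 then a₀ * π
      else ∫ t, a k * Real.cos (k * (x - t) - θ) * φ t ∂periodMeasure := by
  have hconv := continuous_integral_comp_sub_left_mul (continuous_cosTail ha 1 θ)
    (periodic_cosTail a 1 θ) hφ
  simp_rw [hf, add_mul, mul_assoc (1 / π)]
  rw [integral_add (integrable_periodMeasure_of_continuous (by fun_prop))
      (integrable_periodMeasure_of_continuous (by fun_prop)), integral_const_mul,
    integral_const_mul, integral_cos_natCast_mul_sub, integral_convolution_mul_cos ha hφ]
  split_ifs
  · ring
  · field_simp
    ring

theorem sub_fourierSum_of_eq_convolution (ha : Summable a) (hφ : Integrable φ periodMeasure)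
    (hf : ∀ x, f x = a₀ / 2 + 1 / π * ∫ t, cosTail a 1 θ (x - t) * φ t ∂periodMeasure)
    (m : ℕ) (x : ℝ) :
    f x - fourierSum m f x =
      1 / π * ∫ t, cosTail a (m + 1) θ (x - t) * φ t ∂periodMeasure := by
  have hfc : Continuous f := by
    have := continuous_integral_comp_sub_left_mul (continuous_cosTail ha 1 θ)
      (periodic_cosTail a 1 θ) hφ
    rw [funext hf]
    fun_prop
  have coefA_zero : fourierCoefA f 0 = a₀ := by
    have := fourierCoefA_mul_cos_add_fourierCoefB_mul_sin hfc 0 x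
    rw [integral_mul_cos_of_eq_convolution ha hφ hf, if_pos rfl] at this
    simpa [mul_comm a₀, Real.pi_ne_zero] using this
  have term_eq : ∀ k ∈ Finset.Icc 1 m,
      fourierCoefA f k * Real.cos (k * x) + fourierCoefB f k * Real.sin (k * x) =
        1 / π * ∫ t, a k * Real.cos (k * (x - t) - θ) * φ t ∂periodMeasure := fun k hk => by
    rw [fourierCoefA_mul_cos_add_fourierCoefB_mul_sin hfc,
      integral_mul_cos_of_eq_convolution ha hφ hf,
      if_neg (Nat.one_le_iff_ne_zero.1 (Finset.mem_Icc.1 hk).1)]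
  have integrable_term (k : ℕ) :
      Integrable (fun t => a k * Real.cos (k * (x - t) - θ) * φ t) periodMeasure :=
    hφ.bdd_mul (Continuous.aestronglyMeasurable (by fun_prop))
      (.of_forall fun t => abs_mul_cos_le (a k) _)
  rw [fourierSum, coefA_zero, Finset.sum_congr rfl term_eq, ← Finset.mul_sum, hf x]
  simp_rw [← sum_add_cosTail_succ ha m, add_mul, Finset.sum_mul]
  rw [integral_add (integrable_finsetSum _ fun k _ => integrable_term k)
      (integrable_comp_sub_left_mul (continuous_cosTail ha _ θ) (periodic_cosTail a _ θ) hφ x),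
    integral_finsetSum _ fun k _ => integrable_term k]
  ring

end FourierRemainder

section KernelZeros

variable {α r : ℝ}

theorem completelyMonotoneSeq_poissonCoeff_add_one (hα : 0 ≤ α) (hr₀ : 0 ≤ r) (hr₁ : r ≤ 1) :
    CompletelyMonotoneSeq fun k => poissonCoeff α r (k + 1) := fun j k => by
  simpa [poissonCoeff] using
    (CompletelyMonotoneUpTo.exp_neg_mul_rpow j hα hr₀ hr₁).iterate_negFwdDiff_nonneg k

theorem poissonCoeff_add_one_le (hα : 0 ≤ α) (hr : 1 ≤ r) (k : ℕ) :
    poissonCoeff α r (k + 1) ≤ Real.exp (-α) * Real.exp (-α) ^ k := by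
  have one_le : (1 : ℝ) ≤ (k + 1 : ℕ) := by simp
  have le_rpow := Real.self_le_rpow_of_one_le one_le hr
  rw [← pow_succ', ← Real.exp_nat_mul, poissonCoeff, Real.exp_le_exp]
  nlinarith

theorem exists_analyticAt_eq_tsum_poissonCoeff (hα : 0 < α) (hr : 0 < r) :
    ∃ G : ℂ → ℂ, ∀ z : ℂ, ‖z‖ = 1 → z ≠ 1 →
      AnalyticAt ℂ G z ∧ G z = ∑' k, (poissonCoeff α r (k + 1) : ℂ) * z ^ k := by
  rcases le_total r 1 with hr₁ | hr₁
  · exact (completelyMonotoneSeq_poissonCoeff_add_one hα.le hr.le hr₁).exists_analyticAt_eq_tsum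
      (summable_poissonCoeff_add hα hr 1)
  · refine ⟨_, fun z hz _ => ⟨analyticAt_tsum_mul_pow (C := Real.exp (-α)) (Real.exp_pos (-α)).le
      (fun k => ?_) (by simpa [hz] using hα), rfl⟩⟩
    rw [Complex.norm_of_nonneg (poissonCoeff_pos α r _).le]
    exact poissonCoeff_add_one_le hα.le hr₁ k

theorem ae_genPoissonKernel_sub_ne_zero (hα : 0 < α) (hr : 0 < r) (β x : ℝ) :
    ∀ᵐ t, genPoissonKernel α r β (x - t) ≠ 0 := by
  obtain ⟨G, hG⟩ := exists_analyticAt_eq_tsum_poissonCoeff hα hr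
  obtain ⟨t₀, ht₀, hne⟩ := exists_cosTail_one_ne_zero (summable_poissonCoeff_add hα hr 0)
    (poissonCoeff_pos α r 1).ne' (β * π / 2)
  rw [genPoissonKernel_eq_modulate hα hr]
  exact (Measure.measurePreserving_sub_left volume x).quasiMeasurePreserving.ae
    (ae_ne_zero_of_periodic_of_analyticOnNhd_Ioo (periodic_modulate (periodic_Pn α r 1) 1 _)
      Real.two_pi_pos (analyticOnNhd_modulate_expSeries hG 1 _) ht₀ hne)

theorem integral_mul_eq_zero_of_not_aestronglyMeasurable {X : Type*} [MeasurableSpace X]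
    {μ : Measure X} {g φ : X → ℝ} (hg : AEMeasurable g μ) (hg₀ : ∀ᵐ t ∂μ, g t ≠ 0)
    (hφ : ¬AEStronglyMeasurable φ μ) : ∫ t, g t * φ t ∂μ = 0 := by
  refine integral_undef fun hint => hφ ?_
  refine (hg.inv.aestronglyMeasurable.mul hint.aestronglyMeasurable).congr ?_
  filter_upwards [hg₀] with t ht
  simp [ht]

end KernelZeros

section Deviation

variable {α r β : ℝ} {p q : ℝ≥0∞} {f : ℝ → ℝ} {n : ℕ}

theorem sub_fourierSum_of_eq_genPoissonKernel_convolution (hα : 0 < α) (hr : 0 < r) {a₀ : ℝ}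
    {φ : ℝ → ℝ} (hφ : Integrable φ periodMeasure)
    (hf : ∀ x, f x = a₀ / 2 + 1 / π * ∫ t in (-π)..π, genPoissonKernel α r β (x - t) * φ t)
    (hn : n ≠ 0) (x : ℝ) :
    f x - fourierSum (n - 1) f x =
      1 / π * ∫ t, modulate n (β * π / 2) (Pn α r n) (x - t) * φ t ∂periodMeasure := by
  obtain ⟨m, rfl⟩ := Nat.exists_eq_succ_of_ne_zero hn
  simp_rw [intervalIntegral_neg_pi_pi, genPoissonKernel_eq_modulate hα hr] at hf
  exact sub_fourierSum_of_eq_convolution (summable_poissonCoeff_add hα hr 0) hφ hf m x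

/- The class admits nonmeasurable densities, for which the defining integral takes the junk value
`0`: the kernel being nonzero a.e., its product with such a density is not integrable. -/
theorem exists_measurable_density (hα : 0 < α) (hr : 0 < r) (hf : f ∈ poissonClass α r β p) :
    ∃ (a₀ : ℝ) (φ : ℝ → ℝ), AEStronglyMeasurable φ periodMeasure ∧
      eLpNorm φ p periodMeasure ≤ 1 ∧
      ∀ x, f x = a₀ / 2 + 1 / π * ∫ t in (-π)..π, genPoissonKernel α r β (x - t) * φ t := by
  obtain ⟨-, a₀, φ, hφT, hφ_le, -, hfφ⟩ := hf
  by_cases hφ : AEStronglyMeasurable φ periodMeasure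
  · exact ⟨a₀, φ, hφ, (eLpNorm_restrict_Ioc_zero_two_pi hφT hφ p).symm.trans_le hφ_le, hfφ⟩
  · refine ⟨a₀, 0, aestronglyMeasurable_zero, by simp, fun x => ?_⟩
    have hK : Measurable (genPoissonKernel α r β) := by
      rw [genPoissonKernel_eq_modulate hα hr]
      exact (continuous_modulate (differentiable_Pn hα hr 1).continuous 1 _).measurable
    have integral_eq_zero := integral_mul_eq_zero_of_not_aestronglyMeasurable
      (hK.comp (measurable_const_sub x)).aemeasurable
      (ae_restrict_of_ae (ae_genPoissonKernel_sub_ne_zero hα hr β x)) hφ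
    rw [hfφ, intervalIntegral_neg_pi_pi]
    simpa using integral_eq_zero

theorem abs_sub_fourierSum_le [p.HolderConjugate q] (hα : 0 < α) (hr : 0 < r)
    (hf : f ∈ poissonClass α r β p) (hn : n ≠ 0) (x : ℝ) :
    |f x - fourierSum (n - 1) f x| ≤
      1 / π * lpNorm (modulate n (β * π / 2) (Pn α r n)) q periodMeasure := by
  obtain ⟨a₀, φ, hφ, hφ_le, hfφ⟩ := exists_measurable_density hα hr hf
  have hφ_int : Integrable φ periodMeasure :=
    MemLp.integrable (ENNReal.HolderConjugate.one_le p q)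
      ⟨hφ, hφ_le.trans_lt ENNReal.one_lt_top⟩
  have hF : Continuous (modulate n (β * π / 2) (Pn α r n)) :=
    continuous_modulate (differentiable_Pn hα hr n).continuous n _
  rw [sub_fourierSum_of_eq_genPoissonKernel_convolution hα hr hφ_int hfφ hn, abs_mul,
    abs_of_pos (one_div_pos.2 Real.pi_pos), ← lpNorm_comp_sub_left_periodMeasure
      (periodic_modulate (periodic_Pn α r n) n _) hF.aestronglyMeasurable x]
  gcongr
  exact abs_integral_mul_le_lpNorm (p := p)
    (memLp_periodMeasure_of_continuous (by fun_prop) q) hφ hφ_le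

theorem EnC_nonneg (α r β : ℝ) (p : ℝ≥0∞) (n : ℕ) : 0 ≤ EnC α r β p n :=
  Real.iSup_nonneg fun _ => Real.iSup_nonneg fun _ => Real.iSup_nonneg fun _ => abs_nonneg _

theorem iSup_abs_sub_fourierSum_le [p.HolderConjugate q] (hα : 0 < α) (hr : 0 < r) (hn : n ≠ 0)
    (f : ℝ → ℝ) :
    ⨆ (_ : f ∈ poissonClass α r β p) (x : ℝ), |f x - fourierSum (n - 1) f x| ≤
      1 / π * lpNorm (modulate n (β * π / 2) (Pn α r n)) q periodMeasure := by
  have bound_nonneg :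
      0 ≤ 1 / π * lpNorm (modulate n (β * π / 2) (Pn α r n)) q periodMeasure :=
    mul_nonneg (by positivity) lpNorm_nonneg
  exact Real.iSup_le (fun hf => Real.iSup_le (abs_sub_fourierSum_le hα hr hf hn) bound_nonneg)
    bound_nonneg

theorem pi_mul_EnC_le [p.HolderConjugate q] (hα : 0 < α) (hr : 0 < r) (hn : n ≠ 0) :
    π * EnC α r β p n ≤ lpNorm (modulate n (β * π / 2) (Pn α r n)) q periodMeasure := by
  rw [← le_div_iff₀' Real.pi_pos, div_eq_inv_mul, ← one_div]
  exact Real.iSup_le (iSup_abs_sub_fourierSum_le hα hr hn)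
    (mul_nonneg (by positivity) lpNorm_nonneg)

theorem abs_sub_fourierSum_le_EnC [p.HolderConjugate q] (hα : 0 < α) (hr : 0 < r)
    (hf : f ∈ poissonClass α r β p) (hn : n ≠ 0) (x : ℝ) :
    |f x - fourierSum (n - 1) f x| ≤ EnC α r β p n := by
  refine le_ciSup_of_le ⟨_, Set.forall_mem_range.2
    (iSup_abs_sub_fourierSum_le (q := q) hα hr hn)⟩ f ?_
  rw [ciSup_pos hf]
  exact le_ciSup (f := fun x => |f x - fourierSum (n - 1) f x|) ⟨_, Set.forall_mem_range.2
    (abs_sub_fourierSum_le (q := q) hα hr hf hn)⟩ x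

theorem convolution_mem_poissonClass (hα : 0 < α) (hr : 0 < r) {φ : ℝ → ℝ} (hφ : Measurable φ)
    (hφT : Function.Periodic φ (2 * π)) (hφ_le : eLpNorm φ p periodMeasure ≤ 1)
    (integral_eq_zero : ∫ t, φ t ∂periodMeasure = 0) :
    (fun x => 1 / π * ∫ t in (-π)..π, genPoissonKernel α r β (x - t) * φ t) ∈
      poissonClass α r β p := by
  refine ⟨fun x => ?_, 0, φ, hφT, ?_, ?_, fun x => by simp⟩
  · have hKT : Function.Periodic (genPoissonKernel α r β) (2 * π) := by
      rw [genPoissonKernel_eq_modulate hα hr]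
      exact periodic_modulate (periodic_Pn α r 1) 1 _
    simp_rw [add_sub_right_comm x, hKT _]
  · rwa [eLpNorm_restrict_Ioc_zero_two_pi hφT hφ.aestronglyMeasurable]
  · have integral_shift := hφT.intervalIntegral_add_eq 0 (-π)
    rwa [zero_add, show -π + 2 * π = π by ring, intervalIntegral_neg_pi_pi,
      integral_eq_zero] at integral_shift

theorem lpNorm_modulate_Pn_sub_le_pi_mul_EnC [p.HolderConjugate q] (hα : 0 < α) (hr : 0 < r)
    (hn : n ≠ 0) :
    lpNorm (modulate n (β * π / 2) (Pn α r n)) q periodMeasure -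
      (Real.exp (Mn α r n * (π / n)) - 1) * lpNorm (Pn α r n) q periodMeasure / 2 ≤
        π * EnC α r β p n := by
  refine sub_le_iff_le_add.2 (le_of_forall_lt_imp_le_of_dense fun c hc => sub_le_iff_le_add.1 ?_)
  obtain ⟨φ, hφ, hφT, hφ_le, integral_eq_zero, c_le⟩ :=
    exists_mean_zero_le_integral_modulate_mul (p := p) (Mn_pos hα hr n) (differentiable_Pn hα hr n)
      (norm_deriv_Pn_le hα hr n) (periodic_Pn α r n) hn (β * π / 2) hc
  have hφ_int : Integrable φ periodMeasure :=
    MemLp.integrable (ENNReal.HolderConjugate.one_le p q)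
      ⟨hφ.aestronglyMeasurable, hφ_le.trans_lt ENNReal.one_lt_top⟩
  have deviation_le := abs_sub_fourierSum_le_EnC (q := q) hα hr
    (convolution_mem_poissonClass (β := β) hα hr hφ hφT hφ_le integral_eq_zero) hn 0
  have deviation_eq := sub_fourierSum_of_eq_genPoissonKernel_convolution (β := β) (a₀ := 0)
    (f := fun x => 1 / π * ∫ t in (-π)..π, genPoissonKernel α r β (x - t) * φ t)
    hα hr hφ_int (fun x => by simp) hn 0
  rw [deviation_eq] at deviation_le
  refine c_le.trans ((div_le_iff₀' Real.pi_pos).1 ?_)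
  rw [div_eq_inv_mul, ← one_div]
  exact (le_abs_self _).trans deviation_le

end Deviation

section Asymptotics

variable {α r β : ℝ} {p q : ℝ≥0∞} {n : ℕ}

theorem abs_pi_mul_EnC_sub_phaseMean_le_lpNorm [p.HolderConjugate q] (hα : 0 < α) (hr : 0 < r)
    (hn : n ≠ 0) :
    |π * EnC α r β p n - phaseMean q (Pn α r n)| ≤ lpNorm (Pn α r n) q periodMeasure := by
  have hP := (differentiable_Pn hα hr n).continuous
  refine abs_sub_le_of_nonneg_of_le (mul_nonneg Real.pi_pos.le (EnC_nonneg α r β p n))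
    ((pi_mul_EnC_le hα hr hn).trans (lpNorm_modulate_le hP n (β * π / 2) q))
    (phaseMean_nonneg q _) (phaseMean_le_lpNorm hP ?_)
  exact ENNReal.HolderConjugate.ne_zero q p

theorem abs_pi_mul_EnC_sub_phaseMean_le_exp [p.HolderConjugate q] (hα : 0 < α) (hr : 0 < r)
    (hn : n ≠ 0) :
    |π * EnC α r β p n - phaseMean q (Pn α r n)| ≤
      3 / 2 * (Real.exp (Mn α r n * (2 * π / n)) - 1) * lpNorm (Pn α r n) q periodMeasure := by
  have hM := Mn_pos hα hr n
  have upper := pi_mul_EnC_le (β := β) (p := p) (q := q) hα hr hn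
  have lower := lpNorm_modulate_Pn_sub_le_pi_mul_EnC (β := β) (p := p) (q := q) hα hr hn
  have phase := abs_le.1 <| abs_lpNorm_modulate_sub_phaseMean_le hM (differentiable_Pn hα hr n)
    (norm_deriv_Pn_le hα hr n) (periodic_Pn α r n) hn
    (ENNReal.HolderConjugate.one_le q p) (β * π / 2)
  have exp_mul_le : (Real.exp (Mn α r n * (π / n)) - 1) * lpNorm (Pn α r n) q periodMeasure ≤
      (Real.exp (Mn α r n * (2 * π / n)) - 1) * lpNorm (Pn α r n) q periodMeasure := by
    gcongr
    · exact lpNorm_nonneg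
    · linarith [Real.pi_pos]
  have exp_mul_nonneg :
      0 ≤ (Real.exp (Mn α r n * (2 * π / n)) - 1) * lpNorm (Pn α r n) q periodMeasure :=
    mul_nonneg (sub_nonneg.2 (Real.one_le_exp (by positivity))) lpNorm_nonneg
  rw [abs_le]
  constructor <;> linarith [phase.1, phase.2, exp_mul_nonneg]

theorem min_one_exp_two_pi_mul_sub_one_lt {x : ℝ} (hx : 0 < x) :
    min 1 (3 / 2 * (Real.exp (2 * π * x) - 1)) < 14 * (π * x) := by
  have hπx : 0 < π * x := by positivity
  rcases le_or_gt (1 / 2) (2 * π * x) with hlarge | hsmall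
  · exact (min_le_left _ _).trans_lt (by linarith)
  · have abs_eq : |2 * π * x| = 2 * π * x := abs_of_pos (by positivity)
    have exp_le := (le_abs_self _).trans (Real.abs_exp_sub_one_le (by linarith : |2 * π * x| ≤ 1))
    exact (min_le_right _ _).trans_lt (by linarith)

theorem abs_EnC_sub_phaseMean_div_pi_lt [p.HolderConjugate q] (hα : 0 < α) (hr : 0 < r)
    (hn : n ≠ 0) :
    |EnC α r β p n - phaseMean q (Pn α r n) / π| <
      14 * (lpNorm (Pn α r n) q periodMeasure * (Mn α r n / n)) := by
  have hN : 0 < lpNorm (Pn α r n) q periodMeasure :=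
    lpNorm_Pn_pos hα hr n (ENNReal.HolderConjugate.ne_zero q p)
  have hx : 0 < Mn α r n / n := div_pos (Mn_pos hα hr n) (by positivity)
  have exponent_eq : Mn α r n * (2 * π / n) = 2 * π * (Mn α r n / n) := by ring
  rw [sub_div' Real.pi_ne_zero, abs_div, abs_of_pos Real.pi_pos, div_lt_iff₀ Real.pi_pos,
    mul_comm (EnC _ _ _ _ _)]
  calc |π * EnC α r β p n - phaseMean q (Pn α r n)|
      ≤ min 1 (3 / 2 * (Real.exp (2 * π * (Mn α r n / n)) - 1)) *
          lpNorm (Pn α r n) q periodMeasure := by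
        rw [min_mul_of_nonneg _ _ hN.le, one_mul, ← exponent_eq]
        exact le_min (abs_pi_mul_EnC_sub_phaseMean_le_lpNorm hα hr hn)
          (abs_pi_mul_EnC_sub_phaseMean_le_exp hα hr hn)
    _ < 14 * (π * (Mn α r n / n)) * lpNorm (Pn α r n) q periodMeasure := by
        gcongr
        exact min_one_exp_two_pi_mul_sub_one_lt hx
    _ = 14 * (lpNorm (Pn α r n) q periodMeasure * (Mn α r n / n)) * π := by ring

theorem phaseMean_div_pi (q : ℝ≥0∞) (P : ℝ → ℂ) :
    phaseMean q P / π = lpNorm P q periodMeasure *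
      (cosNorm q / ((2 : ℝ) ^ (1 / q.toReal) * π ^ ((1 : ℝ) + 1 / q.toReal))) := by
  rw [phaseMean, Real.rpow_add Real.pi_pos, Real.rpow_one,
    Real.mul_rpow zero_le_two Real.pi_pos.le]
  ring

end Asymptotics

theorem statement19_general (α r β : ℝ) (p p' : ℝ≥0∞) (hα : 0 < α) (hr0 : 0 < r)
    (hpp' : 1 / p + 1 / p' = 1) (n : ℕ) (hn : 1 ≤ n) :
    ∃ δ : ℝ, |δ| < 14 ∧
      EnC α r β p n =
        (eLpNorm (Pn α r n) p' (volume.restrict (Set.Ioc (-π) π))).toReal *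
          (cosNorm p' / ((2 : ℝ) ^ (1 / p'.toReal) * π ^ ((1 : ℝ) + 1 / p'.toReal)) +
            δ * Mn α r n / n) := by
  have : p.HolderConjugate p' := ⟨by simpa using hpp'⟩
  have hn₀ : n ≠ 0 := Nat.one_le_iff_ne_zero.1 hn
  have hP := memLp_periodMeasure_of_continuous (differentiable_Pn hα hr0 n).continuous p'
  have remainder_pos : 0 < lpNorm (Pn α r n) p' periodMeasure * (Mn α r n / n) :=
    mul_pos (lpNorm_Pn_pos hα hr0 n (ENNReal.HolderConjugate.ne_zero p' p))
      (div_pos (Mn_pos hα hr0 n) (by positivity))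
  refine ⟨(EnC α r β p n - phaseMean p' (Pn α r n) / π) /
    (lpNorm (Pn α r n) p' periodMeasure * (Mn α r n / n)), ?_, ?_⟩
  · rw [abs_div, abs_of_pos remainder_pos, div_lt_iff₀ remainder_pos]
    exact abs_EnC_sub_phaseMean_div_pi_lt hα hr0 hn₀
  · rw [toReal_eLpNorm hP.aestronglyMeasurable, mul_add, ← phaseMean_div_pi, mul_div_assoc,
      mul_left_comm, div_mul_cancel₀ _ remainder_pos.ne', add_sub_cancel]

theorem statement19 (α r β : ℝ) (p p' : ℝ≥0∞)
    (hα : 0 < α) (hr0 : 0 < r) (hr1 : r < 1) (hp : 1 ≤ p)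
    (hpp' : 1 / p + 1 / p' = 1) :
    ∀ n : ℕ, 1 ≤ n → (p' ≠ ∞ → 4 * π * p'.toReal * Mn α r n ≤ (n : ℝ)) →
      ∃ δ : ℝ, |δ| < 14 ∧
        EnC α r β p n =
          (eLpNorm (Pn α r n) p' (volume.restrict (Set.Ioc (-π) π))).toReal *
            (cosNorm p' / ((2 : ℝ) ^ (1 / p'.toReal) * π ^ ((1 : ℝ) + 1 / p'.toReal)) +
              δ * Mn α r n / n) := by
  intro n hn _
  exact statement19_general α r β p p' hα hr0 hpp' n hn
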